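/- ε-solution guarantee for Accelerated Decentralized Cubic Newton (Theorem 3 / acc_delta_choice): under the algorithmic setup described in the context, let ε > 0, α = min{ 4/5, (3μ̄R̄^{−1}/(160L̄₂))^{1/3} }, parameters L = 3L̄₂, δ_{2,k} = 3Δ₂^k, κ_{2,k} = μ̄/2, κ_{3,k} = (3/2)·μ̄·R̄^{−1}, and suppose for every k = 0,…,N the consensus errors satisfy Δ̂_H^k ≤ min{ μ̄/(60√5·α²), α·μ̂·ε/(320·L̄₁·R̄²) }, Δ̂_g^k ≤ min{ α·μ̂·ε/(160·L̄₁·R̄), α·ε/(160·R̄) }, Δ̂_v^k ≤ min{ μ̄/(120√5·α²·L̄₂), α·ε/(320·L̄₁·R̄) }, and Δ̂_{g|x}^{k+1} ≤ ε/(8·R̄). Then for any N ≥ ⌈ log( 2C·(f(x̄⁰) − f(x*))/ε ) / log( 1/(1 − α) ) ⌉, where C = 4Δ₁⁰/(μ̄R) + 4Δ₁⁰·R̄/(μ̄R²) + 4Δ₂⁰/μ̄ + 1/2 + ((8L̄₂ + 3μ̄R̄^{−1})/(6μ̄))·R and R = ‖x⁰ − x*‖, it holds that f(x̄^{N+1})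 − f(x*) ≤ ε. -/

import Mathlib

open scoped RealInnerProductSpace
open Finset

/-- The Hessian of `f : E → ℝ` at `x`, as a continuous linear map `E →L[ℝ] E`
(the derivative of the gradient). Its norm is the operator norm. -/
noncomputable def hess {E : Type*} [NormedAddCommGroup E] [InnerProductSpace ℝ E]
    [FiniteDimensional ℝ E] (f : E → ℝ) (x : E) : E →L[ℝ] E :=
  fderiv ℝ (gradient f) x


/-!
The averaged objective `F` is `μbar`-strongly convex, with gradient `g` and Hessian `H` Lipschitz
with constants `L1bar`, `L2bar`. At every node the vectors `gv` and the maps `Hv` approximate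
`g` and `H` at `vhs` up to `D1 = Δg + 2 L1bar Δv` and `D2 = ΔH + 2 L2bar Δv`, so the proof is that
of an accelerated cubic Newton method with inexact derivatives, run at all nodes at once.

*Cubic step.* Stationarity of the cubic model (`cubic_model_stationary`) makes the gradient at the
new point nearly antiparallel to the step, up to an error of size `D1` (`cubic_step_residual`).
Hence `⟪g xn, vh - xn⟫` pays for `α ⟪g xn, yn - yk⟫` with the help of the strong convexity of the
estimating function (`progress_scalar`, `cubic_step_progress`). The smallness of `α² D2` is used
where the quadratic part of the regularization dominates, that of `α³ L2bar Rbar` where the cubic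
part does.

*Estimating sequences.* The invariant, summed over the nodes, is
`∑ F (xs (k + 1) i) ≤ ∑ (1 - α) ^ k * (min ψ (k + 1) i - T k i) + m * (27/100) ε`, where `T` is the
accumulated contribution at `xstar` of the errors of `gx`. With this shift the error of `gx` meets
only `y - xstar`, which is bounded by `Rbar`. One step at a single node is `node_step`. It leaves
the term `⟪g xn, v - v̄⟫`, which is not small at one node; but `v i - v̄` has zero mean, so after
summation it only meets the variation of `g` over the nodes (`disagreement_le`). This variation is
small because the cubic models are `μhat`-strongly convex, so that their minimizers depend stably
on the data (`cubic_step_stable`).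

*Conclusion.* At `x = xstar` strong convexity gives
`ψ (N + 1) xstar - T N ≤ ((1 - α) ^ (-N) - 1) F xstar + F (xs 1) + regularization`. Together with
`cubic_step_value` for the first step and the choice of `N`, the discounted initial gap is at most
`(7/10) ε` (`initial_gap_le`; the point `vhs 0 i` need not equal `x0`). Jensen's inequality passes
from the nodes to their average.

Three cases are treated apart: a trivial space; `L2bar = 0`, where `α = 0` because of `x / 0 = 0`,
all errors vanish and the last step is an exact Newton step on a quadratic; and
`ε ≥ L1bar Rbar² / 2`, where smoothness and `‖xbar (N + 1) - xstar‖ ≤ Rbar` suffice.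
-/

/-! ### Taylor estimates and strong convexity -/

section Calculus

variable {E : Type*} [NormedAddCommGroup E] [InnerProductSpace ℝ E]

theorem taylor_gradient {g : E → E} {H : E → E →L[ℝ] E} {K : ℝ}
    (hg : ∀ x, HasFDerivAt g (H x) x) (hH : ∀ x y, ‖H x - H y‖ ≤ K * ‖x - y‖) (x h : E) :
    ‖g (x + h) - g x - H x h‖ ≤ K / 2 * ‖h‖ ^ 2 := by
  have hd : ∀ t : ℝ, HasDerivAt (fun t : ℝ => g (x + t • h) - g x - t • H x h)
      (H (x + t • h) h - H x h) t := by
    intro t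
    have h1 : HasDerivAt (fun t : ℝ => x + t • h) h t := by
      simpa using ((hasDerivAt_id t).smul_const h).const_add x
    have h2 := (hg (x + t • h)).comp_hasDerivAt t h1
    have h3 : HasDerivAt (fun t : ℝ => t • H x h) (H x h) t := by
      simpa using (hasDerivAt_id t).smul_const (H x h)
    exact (h2.sub_const (g x)).sub h3
  have hB : ∀ t : ℝ, HasDerivAt (fun t : ℝ => K / 2 * ‖h‖ ^ 2 * t ^ 2) (K * ‖h‖ ^ 2 * t) t := by
    intro t
    have := (hasDerivAt_pow 2 t).const_mul (K / 2 * ‖h‖ ^ 2)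
    exact this.congr_deriv (by push_cast; ring)
  have key := image_norm_le_of_norm_deriv_right_le_deriv_boundary (a := 0) (b := 1)
    (f := fun t : ℝ => g (x + t • h) - g x - t • H x h)
    (fun t _ => (hd t).continuousAt.continuousWithinAt)
    (fun t _ => (hd t).hasDerivWithinAt)
    (B := fun t : ℝ => K / 2 * ‖h‖ ^ 2 * t ^ 2) (by simp) hB
    (by
      intro t ht
      have h1 := hH (x + t • h) x
      have h2 : ‖x + t • h - x‖ = t * ‖h‖ := by
        rw [add_sub_cancel_left, norm_smul, Real.norm_of_nonneg ht.1]
      rw [h2] at h1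
      calc ‖H (x + t • h) h - H x h‖ = ‖(H (x + t • h) - H x) h‖ := by simp
        _ ≤ ‖H (x + t • h) - H x‖ * ‖h‖ := ContinuousLinearMap.le_opNorm _ _
        _ ≤ (K * (t * ‖h‖)) * ‖h‖ := by gcongr
        _ = K * ‖h‖ ^ 2 * t := by ring)
    (x := 1) (by simp)
  simpa using key

theorem taylor_value [CompleteSpace E] {F : E → ℝ} {g : E → E} {H : E → E →L[ℝ] E} {K : ℝ}
    (hF : ∀ x, HasGradientAt F (g x) x)
    (hg : ∀ x, HasFDerivAt g (H x) x) (hH : ∀ x y, ‖H x - H y‖ ≤ K * ‖x - y‖) (x h : E) :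
    |F (x + h) - F x - ⟪g x, h⟫ - 1 / 2 * ⟪H x h, h⟫| ≤ K / 6 * ‖h‖ ^ 3 := by
  have hd : ∀ t : ℝ, HasDerivAt
      (fun t : ℝ => F (x + t • h) - F x - t * ⟪g x, h⟫ - t ^ 2 * (1 / 2 * ⟪H x h, h⟫))
      (⟪g (x + t • h) - g x - H x (t • h), h⟫) t := by
    intro t
    have h1 : HasDerivAt (fun t : ℝ => x + t • h) h t := by
      simpa using ((hasDerivAt_id t).smul_const h).const_add x
    have h2 := ((hF (x + t • h)).hasFDerivAt).comp_hasDerivAt t h1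
    have h3 : HasDerivAt (fun t : ℝ => t * ⟪g x, h⟫) (⟪g x, h⟫) t := by
      simpa using (hasDerivAt_id t).mul_const (⟪g x, h⟫)
    have h4 := (hasDerivAt_pow 2 t).mul_const (1 / 2 * ⟪H x h, h⟫)
    refine (((h2.sub_const (F x)).sub h3).sub h4).congr_deriv ?_
    simp [inner_sub_left, inner_smul_left]
    ring
  have hB : ∀ t : ℝ, HasDerivAt (fun t : ℝ => K / 6 * ‖h‖ ^ 3 * t ^ 3)
      (K / 2 * ‖h‖ ^ 3 * t ^ 2) t := by
    intro t
    have := (hasDerivAt_pow 3 t).const_mul (K / 6 * ‖h‖ ^ 3)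
    exact this.congr_deriv (by push_cast; ring)
  have key := image_norm_le_of_norm_deriv_right_le_deriv_boundary (a := 0) (b := 1)
    (f := fun t : ℝ => F (x + t • h) - F x - t * ⟪g x, h⟫ - t ^ 2 * (1 / 2 * ⟪H x h, h⟫))
    (fun t _ => (hd t).continuousAt.continuousWithinAt)
    (fun t _ => (hd t).hasDerivWithinAt)
    (B := fun t : ℝ => K / 6 * ‖h‖ ^ 3 * t ^ 3) (by simp) hB
    (by
      intro t ht
      have h1 := taylor_gradient hg hH x (t • h)
      rw [norm_smul, Real.norm_of_nonneg ht.1] at h1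
      calc ‖⟪g (x + t • h) - g x - H x (t • h), h⟫‖
          ≤ ‖g (x + t • h) - g x - H x (t • h)‖ * ‖h‖ := norm_inner_le_norm _ _
        _ ≤ (K / 2 * (t * ‖h‖) ^ 2) * ‖h‖ := by gcongr
        _ = K / 2 * ‖h‖ ^ 3 * t ^ 2 := by ring)
    (x := 1) (by simp)
  simpa using key

theorem value_le_of_lipschitz_gradient [CompleteSpace E] {F : E → ℝ} {g : E → E} {K : ℝ}
    (hF : ∀ x, HasGradientAt F (g x) x)
    (hg : ∀ x y, ‖g x - g y‖ ≤ K * ‖x - y‖) (x h : E) :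
    F (x + h) - F x - ⟪g x, h⟫ ≤ K / 2 * ‖h‖ ^ 2 := by
  have hd : ∀ t : ℝ, HasDerivAt
      (fun t : ℝ => F (x + t • h) - F x - t * ⟪g x, h⟫) (⟪g (x + t • h) - g x, h⟫) t := by
    intro t
    have h1 : HasDerivAt (fun t : ℝ => x + t • h) h t := by
      simpa using ((hasDerivAt_id t).smul_const h).const_add x
    have h2 := ((hF (x + t • h)).hasFDerivAt).comp_hasDerivAt t h1
    have h3 : HasDerivAt (fun t : ℝ => t * ⟪g x, h⟫) (⟪g x, h⟫) t := by
      simpa using (hasDerivAt_id t).mul_const (⟪g x, h⟫)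
    refine ((h2.sub_const (F x)).sub h3).congr_deriv ?_
    simp [inner_sub_left]
  have hB : ∀ t : ℝ, HasDerivAt (fun t : ℝ => K / 2 * ‖h‖ ^ 2 * t ^ 2)
      (K * ‖h‖ ^ 2 * t) t := by
    intro t
    have := (hasDerivAt_pow 2 t).const_mul (K / 2 * ‖h‖ ^ 2)
    exact this.congr_deriv (by push_cast; ring)
  have key := image_norm_le_of_norm_deriv_right_le_deriv_boundary (a := 0) (b := 1)
    (f := fun t : ℝ => F (x + t • h) - F x - t * ⟪g x, h⟫)
    (fun t _ => (hd t).continuousAt.continuousWithinAt)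
    (fun t _ => (hd t).hasDerivWithinAt)
    (B := fun t : ℝ => K / 2 * ‖h‖ ^ 2 * t ^ 2) (by simp) hB
    (by
      intro t ht
      have h1 := hg (x + t • h) x
      rw [add_sub_cancel_left, norm_smul, Real.norm_of_nonneg ht.1] at h1
      calc ‖⟪g (x + t • h) - g x, h⟫‖
          ≤ ‖g (x + t • h) - g x‖ * ‖h‖ := norm_inner_le_norm _ _
        _ ≤ (K * (t * ‖h‖)) * ‖h‖ := by gcongr
        _ = K * ‖h‖ ^ 2 * t := by ring)
    (x := 1) (by simp)
  have := le_of_abs_le key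
  simpa using this

theorem first_order_of_convex {φ : E → ℝ} {φ' : E →L[ℝ] ℝ} (hφ : ConvexOn ℝ Set.univ φ) {x : E}
    (hd : HasFDerivAt φ φ' x) (y : E) : φ x + φ' (y - x) ≤ φ y := by
  have hc : ConvexOn ℝ Set.univ (fun t : ℝ => φ (x + t • (y - x))) := by
    have := hφ.comp_affineMap (AffineMap.lineMap x y : ℝ →ᵃ[ℝ] E)
    have e : (fun t : ℝ => φ (x + t • (y - x))) = φ ∘ (AffineMap.lineMap x y : ℝ →ᵃ[ℝ] E) := by
      ext t
      simp [AffineMap.lineMap_apply, add_comm]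
    rw [e]
    exact this
  have h1 : HasDerivAt (fun t : ℝ => x + t • (y - x)) (y - x) 0 := by
    simpa using ((hasDerivAt_id (0 : ℝ)).smul_const (y - x)).const_add x
  have hd' : HasFDerivAt φ φ' (x + (0 : ℝ) • (y - x)) := by simpa using hd
  have h2 := hd'.comp_hasDerivAt (0 : ℝ) h1
  have h3 := hc.le_slope_of_hasDerivAt (x := 0) (y := 1) (by simp) (by simp) one_pos h2
  simp [slope_def_field] at h3
  simp
  linarith

/-- First-order characterisation of strong convexity. -/
theorem first_order_of_strongConvex [CompleteSpace E] {F : E → ℝ} {c : ℝ}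
    (hF : ConvexOn ℝ Set.univ (fun x => F x - c / 2 * ‖x‖ ^ 2)) {x g : E}
    (hd : HasGradientAt F g x) (y : E) : F x + ⟪g, y - x⟫ + c / 2 * ‖y - x‖ ^ 2 ≤ F y := by
  have h1 : HasFDerivAt (fun x : E => c / 2 * ‖x‖ ^ 2) ((c / 2) • (2 • innerSL ℝ x)) x :=
    (hasStrictFDerivAt_norm_sq x).hasFDerivAt.const_mul (c / 2)
  have h2 := first_order_of_convex hF (hd.hasFDerivAt.sub h1) y
  have h3 : ‖y - x‖ ^ 2 = ‖y‖ ^ 2 - 2 * ⟪x, y⟫ + ‖x‖ ^ 2 := by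
    rw [norm_sub_sq_real, real_inner_comm]
  simp [inner_sub_right] at h2
  rw [inner_sub_right, h3]
  linarith

/-- Quadratic growth of a strongly convex function around its minimizer. -/
theorem growth_of_strongConvex {φ : E → ℝ} {σ : ℝ}
    (hφ : ConvexOn ℝ Set.univ (fun x => φ x - σ / 2 * ‖x‖ ^ 2)) {y : E} (hy : ∀ x, φ y ≤ φ x)
    (x : E) : φ y + σ / 2 * ‖x - y‖ ^ 2 ≤ φ x := by
  have hs := strongConvexOn_iff_convex.2 hφ
  have h1 : ∀ t ∈ Set.Ioo (0 : ℝ) 1, φ y + (1 - t) * (σ / 2 * ‖x - y‖ ^ 2) ≤ φ x := by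
    intro t ht
    have h2 := hs.2 (Set.mem_univ x) (Set.mem_univ y) ht.1.le (sub_nonneg.2 ht.2.le)
      (by ring : t + (1 - t) = 1)
    have h3 := hy (t • x + (1 - t) • y)
    simp only [smul_eq_mul] at h2
    have h4 : t * (φ y + (1 - t) * (σ / 2 * ‖x - y‖ ^ 2)) ≤ t * φ x := by nlinarith
    exact le_of_mul_le_mul_left h4 ht.1
  have hlim : Filter.Tendsto (fun t : ℝ => φ y + (1 - t) * (σ / 2 * ‖x - y‖ ^ 2))
      (nhdsWithin 0 (Set.Ioi 0)) (nhds (φ y + (1 - 0) * (σ / 2 * ‖x - y‖ ^ 2))) := by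
    apply Filter.Tendsto.mono_left _ nhdsWithin_le_nhds
    apply Continuous.tendsto
    fun_prop
  have := le_of_tendsto hlim (by
    filter_upwards [Ioo_mem_nhdsGT (zero_lt_one' ℝ)] with t ht using h1 t ht)
  simpa using this

end Calculus

/-! ### Minimizers of the cubic model -/

section CubicModel

variable {E : Type*} [NormedAddCommGroup E] [InnerProductSpace ℝ E]

/-- Stationarity of a global minimizer of the cubic model. -/
theorem cubic_model_stationary {g : E} {H : E →L[ℝ] E} {δ L : ℝ}
    (hsym : ∀ v w : E, ⟪H v, w⟫ = ⟪v, H w⟫) {h : E}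
    (hmin : ∀ w : E, ⟪g, h⟫ + (1 / 2) * ⟪H h, h⟫ + (δ / 2) * ‖h‖ ^ 2 + (L / 6) * ‖h‖ ^ 3 ≤
      ⟪g, w⟫ + (1 / 2) * ⟪H w, w⟫ + (δ / 2) * ‖w‖ ^ 2 + (L / 6) * ‖w‖ ^ 3) :
    g + H h + (δ + L / 2 * ‖h‖) • h = 0 := by
  have d1 : HasFDerivAt (fun w : E => ⟪g, w⟫) (innerSL ℝ g) h := (innerSL ℝ g).hasFDerivAt
  have d2 := (H.hasFDerivAt (x := h)).inner ℝ (hasFDerivAt_id h)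
  have d3 := (hasStrictFDerivAt_norm_sq h).hasFDerivAt
  have d4 : HasFDerivAt (fun w : E => ‖w‖ ^ 3) ((3 * ‖h‖) • innerSL ℝ h) h := by
    have := hasFDerivAt_norm_rpow h (p := 3) (by norm_num)
    have e : (3 : ℝ) - 2 = 1 := by norm_num
    rw [e, Real.rpow_one] at this
    convert this using 2 with w
    norm_cast
  have d := ((d1.add (d2.const_mul (1 / 2))).add (d3.const_mul (δ / 2))).add
    (d4.const_mul (L / 6))
  have hloc : IsLocalMin (fun w : E =>
      ⟪g, w⟫ + (1 / 2) * ⟪H w, w⟫ + (δ / 2) * ‖w‖ ^ 2 + (L / 6) * ‖w‖ ^ 3) h :=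
    Filter.Eventually.of_forall hmin
  have hz := hloc.hasFDerivAt_eq_zero d
  apply ext_inner_right ℝ
  intro w
  have hzw := congrArg (fun (l : E →L[ℝ] ℝ) => l w) hz
  simp [fderivInnerCLM_apply] at hzw
  have e1 : ⟪H w, h⟫ = ⟪H h, w⟫ := by rw [hsym, real_inner_comm]
  simp [inner_add_left, inner_smul_left]
  rw [e1] at hzw
  linarith

theorem inner_norm_smul_sub_nonneg (a b : E) : 0 ≤ ⟪‖a‖ • a - ‖b‖ • b, a - b⟫ := by
  simp only [inner_sub_left, inner_sub_right, real_inner_smul_left, real_inner_self_eq_norm_sq]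
  have h := real_inner_le_norm a b
  rw [real_inner_comm a b]
  have ha := norm_nonneg a
  have hb := norm_nonneg b
  nlinarith [mul_nonneg (add_nonneg ha hb) (sub_nonneg.2 h),
    mul_nonneg (add_nonneg ha hb) (sq_nonneg (‖a‖ - ‖b‖))]

/-- Stability of the cubic step: two stationary points of cubic models with nearby gradient and
Hessian data are close. -/
theorem cubic_step_stable {g g' : E} {H H' : E →L[ℝ] E} {δ L c a b r : ℝ}
    (hδ : 0 ≤ δ) (hL : 0 ≤ L) (hpd : ∀ v : E, c * ‖v‖ ^ 2 ≤ ⟪H v, v⟫) {h h' : E}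
    (hst : g + H h + (δ + L / 2 * ‖h‖) • h = 0) (hst' : g' + H' h' + (δ + L / 2 * ‖h'‖) • h' = 0)
    (hg : ‖g - g'‖ ≤ a) (hH : ‖H - H'‖ ≤ b) (hr : ‖h'‖ ≤ r) :
    c * ‖h - h'‖ ≤ a + b * r := by
  have hmono := inner_norm_smul_sub_nonneg h h'
  have e : H (h - h') + δ • (h - h') + (L / 2) • (‖h‖ • h - ‖h'‖ • h')
      = -((g - g') + (H - H') h') := by
    have e1 : H (h - h') + δ • (h - h') + (L / 2) • (‖h‖ • h - ‖h'‖ • h')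
      + ((g - g') + (H - H') h') = (g + H h + (δ + L / 2 * ‖h‖) • h)
        - (g' + H' h' + (δ + L / 2 * ‖h'‖) • h') := by
      simp only [map_sub, sub_apply]
      module
    rw [hst, hst', sub_zero] at e1
    exact eq_neg_of_add_eq_zero_left e1
  have e2 := congrArg (fun z => ⟪z, h - h'⟫) e
  simp only [inner_add_left, real_inner_smul_left, inner_neg_left,
    real_inner_self_eq_norm_sq] at e2
  have e3 : |⟪g - g', h - h'⟫| ≤ a * ‖h - h'‖ :=
    (abs_real_inner_le_norm _ _).trans (by gcongr)
  have hb : 0 ≤ b := (norm_nonneg _).trans hH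
  have e4 : |⟪(H - H') h', h - h'⟫| ≤ b * r * ‖h - h'‖ := by
    refine (abs_real_inner_le_norm _ _).trans ?_
    have : ‖(H - H') h'‖ ≤ b * r := (ContinuousLinearMap.le_opNorm _ _).trans (by gcongr)
    gcongr
  have e5 : c * ‖h - h'‖ * ‖h - h'‖ ≤ (a + b * r) * ‖h - h'‖ := by
    have := hpd (h - h')
    have h6 := mul_nonneg hδ (sq_nonneg ‖h - h'‖)
    have h7 := mul_nonneg (div_nonneg hL zero_le_two) hmono
    have h8 := (abs_le.1 e3).1
    have h9 := (abs_le.1 e4).1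
    nlinarith
  rcases (norm_nonneg (h - h')).eq_or_lt with h0 | h0
  · rw [← h0, mul_zero]
    have : 0 ≤ a := (norm_nonneg _).trans hg
    have : 0 ≤ r := (norm_nonneg _).trans hr
    positivity
  · exact le_of_mul_le_mul_right e5 h0

end CubicModel

/-- If `u` approximates the average of the values `G j (p j)`, it approximates the average at a
common point `x` close to all `p j`. -/
theorem norm_sub_average_le {E : Type*} [NormedAddCommGroup E] {V : Type*} [NormedAddCommGroup V]
    [NormedSpace ℝ V] {m : ℕ}
    (G : Fin m → E → V) (K : Fin m → ℝ)
    (hG : ∀ i x y, ‖G i x - G i y‖ ≤ K i * ‖x - y‖) (hK : ∀ i, 0 ≤ K i)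
    (p : Fin m → E) (x : E) (u : V) (a D : ℝ)
    (hu : ‖u - (m : ℝ)⁻¹ • ∑ j, G j (p j)‖ ≤ a) (hD : ∀ j, ‖p j - x‖ ≤ D) :
    ‖u - (m : ℝ)⁻¹ • ∑ j, G j x‖ ≤ a + ((m : ℝ)⁻¹ * ∑ j, K j) * D := by
  have e : u - (m : ℝ)⁻¹ • ∑ j, G j x
      = (u - (m : ℝ)⁻¹ • ∑ j, G j (p j)) + (m : ℝ)⁻¹ • ∑ j, (G j (p j) - G j x) := by
    rw [Finset.sum_sub_distrib, smul_sub]; abel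
  have hm : (0 : ℝ) ≤ (m : ℝ)⁻¹ := by positivity
  have h2 : ‖∑ j, (G j (p j) - G j x)‖ ≤ ∑ j, K j * D :=
    norm_sum_le_of_le _ fun j _ => (hG j _ _).trans (mul_le_mul_of_nonneg_left (hD j) (hK j))
  rw [e]
  refine (norm_add_le _ _).trans (add_le_add hu ?_)
  rw [norm_smul, Real.norm_of_nonneg hm, mul_assoc, Finset.sum_mul]
  gcongr

/-! ### The inexact cubic step -/

section Step

variable {E : Type*} [NormedAddCommGroup E] [InnerProductSpace ℝ E]

/-- Up to the gradient error `e`, the gradient at the new point is nearly antiparallel to the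
step `h`. -/
theorem cubic_step_residual {g : E → E} {H : E → E →L[ℝ] E} {K Δ₁ Δ₂ : ℝ}
    (hg : ∀ x, HasFDerivAt g (H x) x) (hH : ∀ x y, ‖H x - H y‖ ≤ K * ‖x - y‖)
    {v h gv : E} {Hv : E →L[ℝ] E} (h1 : ‖gv - g v‖ ≤ Δ₁) (h2 : ‖Hv - H v‖ ≤ Δ₂)
    (hst : gv + Hv h + (3 * Δ₂ + 3 * K / 2 * ‖h‖) • h = 0) :
    ∃ e : E, ‖e‖ ≤ Δ₁ ∧ ‖(g (v + h) - e) + (3 * Δ₂ + 3 * K / 2 * ‖h‖) • h‖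
      ≤ (3 * Δ₂ + 3 * K / 2 * ‖h‖) * ‖h‖ / 3 := by
  refine ⟨g v - gv, by rwa [norm_sub_rev], ?_⟩
  have e : (g (v + h) - (g v - gv)) + (3 * Δ₂ + 3 * K / 2 * ‖h‖) • h
      = (g (v + h) - g v - H v h) + -((Hv - H v) h) := by
    have : (3 * Δ₂ + 3 * K / 2 * ‖h‖) • h = -(gv + Hv h) := eq_neg_of_add_eq_zero_right hst
    rw [this, sub_apply]
    abel
  rw [e]
  refine (norm_add_le _ _).trans ?_
  rw [norm_neg]
  have t1 := taylor_gradient hg hH v h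
  have t2 : ‖(Hv - H v) h‖ ≤ Δ₂ * ‖h‖ :=
    (ContinuousLinearMap.le_opNorm _ _).trans (by gcongr)
  nlinarith

theorem cubic_amgm {u r : ℝ} (hu : 0 ≤ u) (hr : 0 ≤ r) :
    3 / 2 * u ^ 2 * r ≤ 2 / 3 * r ^ 3 + 4 / 3 * u ^ 3 := by
  nlinarith [mul_nonneg hr (sq_nonneg (r - u)), mul_nonneg hu (sq_nonneg (r - u)),
    pow_nonneg hu 3, pow_nonneg hr 3]

/-- The scalar inequality behind acceleration. According to whether the quadratic or the cubic
part of the regularization dominates, the progress `X` pays for the linear term `α q s` jointly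
with the strong convexity term `μ s² / 20`. -/
theorem progress_scalar {q r s X Δ₂ K μ α ρ : ℝ} (hq : 0 ≤ q) (hr : 0 ≤ r) (hs : 0 ≤ s)
    (hsρ : s ≤ 2 * ρ) (hΔ : 0 ≤ Δ₂) (hK : 0 ≤ K) (hα : 0 ≤ α)
    (hμ : 0 < μ) (hΔα : 60 * α ^ 2 * Δ₂ ≤ μ) (hKα : 160 * K * ρ * α ^ 3 ≤ 3 * μ)
    (hX0 : q = 0 → 0 ≤ X)
    (hX : q ^ 2 + 8 / 9 * ((3 * Δ₂ + 3 * K / 2 * r) * r) ^ 2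
      ≤ 2 * (3 * Δ₂ + 3 * K / 2 * r) * X)
    (hq' : q ≤ 4 / 3 * (3 * Δ₂ + 3 * K / 2 * r) * r) :
    0 ≤ X - α * q * s + μ / 20 * s ^ 2 := by
  have hKr : 0 ≤ K * r := mul_nonneg hK hr
  rcases eq_or_lt_of_le (show 0 ≤ 3 * Δ₂ + 3 * K / 2 * r by nlinarith) with h0 | h0
  · have hq0 : q = 0 := by
      rw [← h0] at hq'; nlinarith
    have := hX0 hq0
    rw [hq0]
    have : 0 ≤ μ / 20 * s ^ 2 := by positivity
    linarith
  have hX1 : 0 ≤ X := by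
    by_contra hneg
    push Not at hneg
    have : 0 < (3 * Δ₂ + 3 * K / 2 * r) * (-X) := mul_pos h0 (by linarith)
    nlinarith [sq_nonneg q, sq_nonneg ((3 * Δ₂ + 3 * K / 2 * r) * r)]
  rcases le_total (K * r) (2 * Δ₂) with hc | hc
  · -- quadratic regularization dominates: `q² ≤ 12 Δ₂ X`
    have hΔpos : 0 < Δ₂ := by nlinarith
    have h1 : q ^ 2 ≤ 12 * Δ₂ * X := by
      nlinarith [sq_nonneg ((3 * Δ₂ + 3 * K / 2 * r) * r),
        mul_nonneg hX1 (sub_nonneg.2 hc)]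
    have h2 : 0 ≤ 12 * Δ₂ * (X - α * q * s + μ / 20 * s ^ 2) := by
      have : 0 ≤ 12 * Δ₂ * (s ^ 2 * (μ - 60 * α ^ 2 * Δ₂)) :=
        mul_nonneg (by positivity) (mul_nonneg (sq_nonneg s) (by linarith))
      nlinarith [sq_nonneg (q - 6 * Δ₂ * α * s)]
    exact nonneg_of_mul_nonneg_right h2 (by positivity)
  · -- cubic regularization dominates: `q² + 4 K² r⁴ ≤ 6 K r X`
    have hKrpos : 0 < K * r := by nlinarith
    have h2 : q ^ 2 + 4 * (K * r) ^ 2 * r ^ 2 ≤ 6 * (K * r) * X := by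
      set z := 3 * Δ₂ + 3 * K / 2 * r with hz
      have hz1 : z ≤ 3 * (K * r) := by rw [hz]; nlinarith
      have hz2 : 3 / 2 * (K * r) ≤ z := by rw [hz]; nlinarith
      -- `q² / z + 8/9 z r² ≤ 2 X` and `3/2 K r ≤ z ≤ 3 K r`
      have h3 : q ^ 2 / z + 8 / 9 * z * r ^ 2 ≤ 2 * X := by
        have : q ^ 2 / z + 8 / 9 * z * r ^ 2 = (q ^ 2 + 8 / 9 * (z * r) ^ 2) / z := by
          field_simp
        rw [this, div_le_iff₀ h0]
        linarith
      have h4 : q ^ 2 / (3 * (K * r)) ≤ q ^ 2 / z :=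
        div_le_div_of_nonneg_left (sq_nonneg q) h0 hz1
      have h5 : q ^ 2 / (3 * (K * r)) + 4 / 3 * (K * r) * r ^ 2 ≤ 2 * X := by
        nlinarith [mul_nonneg (sub_nonneg.2 hz2) (sq_nonneg r)]
      have h6 := mul_le_mul_of_nonneg_left h5 (show 0 ≤ 3 * (K * r) by positivity)
      have h7 : 3 * (K * r) * (q ^ 2 / (3 * (K * r)) + 4 / 3 * (K * r) * r ^ 2)
          = q ^ 2 + 4 * (K * r) ^ 2 * r ^ 2 := by
        rw [mul_add, mul_div_cancel₀ _ (by positivity)]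
        ring
      linarith
    have h3 : 4 / 3 * K * (α * s) ^ 3 ≤ μ / 20 * s ^ 2 := by
      have a1 : 4 / 3 * K * α ^ 3 * s ≤ μ / 20 := by
        have : 4 / 3 * K * α ^ 3 * s ≤ 4 / 3 * K * α ^ 3 * (2 * ρ) := by gcongr
        nlinarith
      nlinarith [mul_nonneg (sq_nonneg s) (sub_nonneg.2 a1)]
    have h4 := cubic_amgm (mul_nonneg hα hs) hr
    have h5 : 0 ≤ 6 * (K * r) * (X - α * q * s + μ / 20 * s ^ 2) := by
      have a1 : 0 ≤ 6 * (K * r) * (μ / 20 * s ^ 2 - 4 / 3 * K * (α * s) ^ 3) :=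
        mul_nonneg (by positivity) (by linarith)
      have a2 : 0 ≤ 6 * (K * r) * (K * (2 / 3 * r ^ 3 + 4 / 3 * (α * s) ^ 3
          - 3 / 2 * (α * s) ^ 2 * r)) :=
        mul_nonneg (by positivity) (mul_nonneg hK (by linarith))
      nlinarith [sq_nonneg (q - 3 * (K * r) * (α * s))]
    exact nonneg_of_mul_nonneg_right h5 (by positivity)

/-- Progress of the cubic step against the displacement `d` of the estimating sequence. -/
theorem cubic_step_progress {g : E → E} {H : E → E →L[ℝ] E} {K Δ₁ Δ₂ μ α ρ : ℝ}
    (hg : ∀ x, HasFDerivAt g (H x) x) (hH : ∀ x y, ‖H x - H y‖ ≤ K * ‖x - y‖)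
    {v h gv d : E} {Hv : E →L[ℝ] E} (h1 : ‖gv - g v‖ ≤ Δ₁) (h2 : ‖Hv - H v‖ ≤ Δ₂)
    (hst : gv + Hv h + (3 * Δ₂ + 3 * K / 2 * ‖h‖) • h = 0)
    (hK : 0 ≤ K) (hα : 0 ≤ α) (hμ : 0 < μ)
    (hΔα : 60 * α ^ 2 * Δ₂ ≤ μ) (hKα : 160 * K * ρ * α ^ 3 ≤ 3 * μ)
    (hh : ‖h‖ ≤ 2 * ρ) (hd : ‖d‖ ≤ 2 * ρ) :
    -(2 * ρ * (1 + α) * Δ₁) ≤ ⟪g (v + h), -h⟫ + α * ⟪g (v + h), d⟫ + μ / 20 * ‖d‖ ^ 2 := by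
  obtain ⟨e, he, hres⟩ := cubic_step_residual hg hH h1 h2 hst
  have hΔ₂ : 0 ≤ Δ₂ := (norm_nonneg _).trans h2
  have hΔ₁ : 0 ≤ Δ₁ := (norm_nonneg _).trans h1
  set G := g (v + h) - e with hG
  have hgG : g (v + h) = G + e := by rw [hG]; abel
  set z := 3 * Δ₂ + 3 * K / 2 * ‖h‖ with hz
  have hz0 : 0 ≤ z := by positivity
  have hs := progress_scalar (q := ‖G‖) (r := ‖h‖) (s := ‖d‖) (X := ⟪G, -h⟫) (norm_nonneg _)
    (norm_nonneg _) (norm_nonneg _) hd hΔ₂ hK hα hμ hΔα hKα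
    (fun h0 => by rw [norm_eq_zero.1 h0]; simp)
    (by
      rw [← hz]
      have hsq : ‖G + z • h‖ ^ 2 ≤ (z * ‖h‖ / 3) ^ 2 := by gcongr
      rw [norm_add_sq_real, norm_smul, Real.norm_of_nonneg hz0, real_inner_smul_right] at hsq
      rw [inner_neg_right]
      nlinarith)
    (by
      rw [← hz]
      have : ‖G‖ ≤ ‖G + z • h‖ + ‖z • h‖ := by
        simpa using norm_sub_le (G + z • h) (z • h)
      rw [norm_smul, Real.norm_of_nonneg hz0] at this
      linarith)
  have a1 : -(‖G‖ * ‖d‖) ≤ ⟪G, d⟫ := (abs_le.1 (abs_real_inner_le_norm G d)).1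
  have a2 : -(Δ₁ * (2 * ρ)) ≤ ⟪e, -h⟫ := by
    have := (abs_le.1 (abs_real_inner_le_norm e (-h))).1
    rw [norm_neg] at this
    have : ‖e‖ * ‖h‖ ≤ Δ₁ * (2 * ρ) := by gcongr
    linarith
  have a3 : -(Δ₁ * (2 * ρ)) ≤ ⟪e, d⟫ := by
    have := (abs_le.1 (abs_real_inner_le_norm e d)).1
    have : ‖e‖ * ‖d‖ ≤ Δ₁ * (2 * ρ) := by gcongr
    linarith
  rw [hgG, inner_add_left, inner_add_left]
  nlinarith [mul_le_mul_of_nonneg_left a1 hα, mul_le_mul_of_nonneg_left a3 hα]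

/-- An inexact cubic step decreases the function to its value at any `v + w`, up to the error of the
model. -/
theorem cubic_step_value [CompleteSpace E] {F : E → ℝ} {g : E → E} {H : E → E →L[ℝ] E}
    {K Δ₁ Δ₂ : ℝ} (hF : ∀ x, HasGradientAt F (g x) x)
    (hg : ∀ x, HasFDerivAt g (H x) x) (hH : ∀ x y, ‖H x - H y‖ ≤ K * ‖x - y‖) (hK : 0 ≤ K)
    {v h gv : E} {Hv : E →L[ℝ] E} (h1 : ‖gv - g v‖ ≤ Δ₁) (h2 : ‖Hv - H v‖ ≤ Δ₂)
    (hmin : ∀ w : E, ⟪gv, h⟫ + (1 / 2) * ⟪Hv h, h⟫ + (3 * Δ₂ / 2) * ‖h‖ ^ 2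
        + (3 * K / 6) * ‖h‖ ^ 3 ≤
      ⟪gv, w⟫ + (1 / 2) * ⟪Hv w, w⟫ + (3 * Δ₂ / 2) * ‖w‖ ^ 2 + (3 * K / 6) * ‖w‖ ^ 3) (w : E) :
    F (v + h) - F (v + w) ≤ Δ₁ * (‖w‖ + ‖h‖) + 2 * Δ₂ * ‖w‖ ^ 2 + 2 / 3 * K * ‖w‖ ^ 3 := by
  have hΔ₂ : 0 ≤ Δ₂ := (norm_nonneg _).trans h2
  have lin : ∀ u : E, |⟪gv, u⟫ - ⟪g v, u⟫| ≤ Δ₁ * ‖u‖ := fun u => by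
    rw [← inner_sub_left]
    exact (abs_real_inner_le_norm _ _).trans (by gcongr)
  have quad : ∀ u : E, |⟪Hv u, u⟫ - ⟪H v u, u⟫| ≤ Δ₂ * ‖u‖ ^ 2 := fun u => by
    rw [← inner_sub_left, ← sub_apply]
    refine (abs_real_inner_le_norm _ _).trans ?_
    have : ‖(Hv - H v) u‖ ≤ Δ₂ * ‖u‖ :=
      (ContinuousLinearMap.le_opNorm _ _).trans (by gcongr)
    nlinarith [norm_nonneg u]
  have t1 := (abs_le.1 (taylor_value hF hg hH v h)).2
  have t2 := (abs_le.1 (taylor_value hF hg hH v w)).1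
  have l1 := (abs_le.1 (lin h)).1
  have l2 := (abs_le.1 (lin w)).2
  have q1 := (abs_le.1 (quad h)).1
  have q2 := (abs_le.1 (quad w)).2
  have hm := hmin w
  have p1 : 0 ≤ Δ₂ * ‖h‖ ^ 2 := by positivity
  have p2 : 0 ≤ K * ‖h‖ ^ 3 := by positivity
  linarith

end Step

/-! ### Estimating functions -/

section Estimating

variable {E : Type*} [NormedAddCommGroup E] [InnerProductSpace ℝ E]

theorem convexOn_affine (c : ℝ) (u : E) : ConvexOn ℝ Set.univ (fun x : E => c + ⟪u, x⟫) := by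
  refine (convexOn_const c convex_univ).add ?_
  exact (innerSL ℝ u).toLinearMap.convexOn convex_univ

theorem convexOn_norm_sub_cube (v : E) : ConvexOn ℝ Set.univ (fun x : E => ‖x - v‖ ^ 3) := by
  have h1 : ConvexOn ℝ Set.univ (fun x : E => ‖x - v‖) := by
    have := (convexOn_univ_norm (E := E)).translate_right (-v)
    simpa [Function.comp_def, sub_eq_add_neg, add_comm] using this
  exact h1.pow (fun _ _ => norm_nonneg _) 3

/-- A quadratic with leading coefficient `s / 2`, minus `s / 2 * ‖x‖ ^ 2`, is affine. -/
theorem convexOn_quadratic_sub (c s w : ℝ) (g p : E) :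
    ConvexOn ℝ Set.univ (fun x : E =>
      w * (c + ⟪g, x - p⟫ + s / 2 * ‖x - p‖ ^ 2) - w * s / 2 * ‖x‖ ^ 2) := by
  have h := convexOn_affine (w * (c - ⟪g, p⟫ + s / 2 * ‖p‖ ^ 2)) (w • (g - s • p))
  have e : (fun x : E => w * (c + ⟪g, x - p⟫ + s / 2 * ‖x - p‖ ^ 2) - w * s / 2 * ‖x‖ ^ 2)
      = fun x : E => w * (c - ⟪g, p⟫ + s / 2 * ‖p‖ ^ 2) + ⟪w • (g - s • p), x⟫ := by
    ext x
    rw [norm_sub_sq_real, real_inner_smul_left, inner_sub_left, inner_sub_right,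
      real_inner_smul_left, real_inner_comm p x]
    ring
  rw [e]
  exact h

/-- Strong convexity of the estimating functions. -/
theorem estimating_strongConvex {ι : Type*} (s : Finset ι) (c₀ a b μ : ℝ) (hb : 0 ≤ b) (v : E)
    (w c : ι → ℝ) (g p : ι → E) :
    ConvexOn ℝ Set.univ (fun x : E => (c₀ + a / 2 * ‖x - v‖ ^ 2 + b * ‖x - v‖ ^ 3
      + ∑ j ∈ s, w j * (c j + ⟪g j, x - p j⟫ + μ / 2 * ‖x - p j‖ ^ 2))
        - (a + μ * ∑ j ∈ s, w j) / 2 * ‖x‖ ^ 2) := by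
  classical
  induction s using Finset.induction_on with
  | empty =>
    have h := (convexOn_quadratic_sub c₀ a 1 0 v).add ((convexOn_norm_sub_cube v).smul hb)
    refine h.congr fun x _ => ?_
    simp
    ring
  | insert i s hi ih =>
    have h := ih.add (convexOn_quadratic_sub (c i) μ (w i) (g i) (p i))
    refine h.congr fun x _ => ?_
    simp only [Pi.add_apply, Finset.sum_insert hi]
    ring

theorem sum_weights (α : ℝ) (hα : α < 1) (k : ℕ) :
    ∑ j ∈ Finset.Icc 1 k, α / (1 - α) ^ j = 1 / (1 - α) ^ k - 1 := by
  induction k with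
  | zero => simp
  | succ k ih =>
    have h : 0 < 1 - α := by linarith
    rw [Finset.sum_Icc_succ_top (by omega), ih, pow_succ]
    field_simp
    ring

end Estimating

/-! ### Iteration count and initial gap -/

section Scalars

/-- The prescribed number of iterations suffices. For `X ≤ 0`, where the logarithm takes a
conventional value, the conclusion is trivial. -/
theorem pow_mul_le_one_of_ceil_le {α X : ℝ} {N : ℕ} (h0 : 0 < α) (h1 : α < 1)
    (hN : ⌈Real.log X / Real.log (1 / (1 - α))⌉ ≤ (N : ℤ)) : (1 - α) ^ N * X ≤ 1 := by
  have hp : 0 < 1 - α := by linarith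
  rcases le_or_gt X 0 with hX | hX
  · have : (1 - α) ^ N * X ≤ 0 := mul_nonpos_of_nonneg_of_nonpos (by positivity) hX
    linarith
  have hl : 0 < Real.log (1 / (1 - α)) := Real.log_pos (by rw [lt_div_iff₀ hp]; linarith)
  have h2 : Real.log X / Real.log (1 / (1 - α)) ≤ N := by
    have := Int.ceil_le.1 hN
    exact_mod_cast this
  rw [div_le_iff₀ hl, ← Real.log_pow] at h2
  have h3 := (Real.log_le_log_iff hX (by positivity)).1 h2
  calc (1 - α) ^ N * X ≤ (1 - α) ^ N * (1 / (1 - α)) ^ N := by gcongr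
    _ = 1 := by rw [← mul_pow, mul_one_div_cancel hp.ne', one_pow]

theorem sq_add_le (R d : ℝ) :
    (R + d) ^ 2 ≤ 1.21 * R ^ 2 + 121 * d ^ 2 := by
  nlinarith [sq_nonneg (R - 10 * d)]

theorem cube_add_le {R d : ℝ} (hR : 0 ≤ R) (hd : 0 ≤ d) :
    (R + d) ^ 3 ≤ 1.331 * R ^ 3 + 1331 * d ^ 3 := by
  rcases le_total (10 * d) R with h | h
  · have h1 : (R + d) ^ 3 ≤ (1.1 * R) ^ 3 := by gcongr; linarith
    have : 0 ≤ d ^ 3 := by positivity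
    nlinarith
  · have h1 : (R + d) ^ 3 ≤ (11 * d) ^ 3 := by gcongr; linarith
    have : 0 ≤ R ^ 3 := by positivity
    nlinarith

set_option maxHeartbeats 1000000 in
/-- The initial gap, discounted by `A = (1 - α) ^ N`, costs at most `7/10` of the accuracy. The
perturbed radius `R'` exceeds `R` by at most the averaging error `d`. -/
theorem initial_gap_le {A R R' d Δ₁ Δ₂ μ L₁ K ρ α ε C D₀ : ℝ} (hA : 0 ≤ A) (hA1 : A ≤ 1)
    (hR : 0 ≤ R) (hR' : 0 ≤ R') (hRd : R' ≤ R + d) (hd : 0 ≤ d) (hΔ₁ : 0 ≤ Δ₁) (hΔ₂ : 0 ≤ Δ₂)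
    (hμ : 0 < μ) (hμL : μ ≤ L₁) (hK : 0 < K) (hρ : 0 < ρ) (hα : 0 < α) (hα1 : α ≤ 4 / 5)
    (hε : 0 < ε) (hεL : ε ≤ L₁ / 2 * ρ ^ 2)
    (hd1 : L₁ * ρ * d ≤ α * ε / 320) (hd2 : α ^ 2 * (K * d) ≤ μ / 240)
    (hΔ1 : Δ₁ * ρ ≤ α * ε / 80) (hΔ2 : 60 * α ^ 2 * Δ₂ ≤ μ)
    (hC : C = 4 * Δ₁ / (μ * R) + 4 * Δ₁ * ρ / (μ * R ^ 2) + 4 * Δ₂ / μ + 1 / 2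
        + ((8 * K + 3 * μ / ρ) / (6 * μ)) * R)
    (hD : μ / 2 * R ^ 2 ≤ D₀) (hAC : A * (2 * C * D₀ / ε) ≤ 1) :
    A * (Δ₁ * (2 * R' + ρ) + 2 * Δ₂ * R' ^ 2 + 2 / 3 * K * R' ^ 3 + μ / 4 * R' ^ 2
      + μ / ρ / 4 * R' ^ 3) ≤ 7 / 10 * ε := by
  have hC0 : 0 ≤ C := by rw [hC]; positivity
  have hL₁ : 0 < L₁ := hμ.trans_le hμL
  set M := μ / ρ with hM
  have hM0 : 0 < M := by positivity
  set B := 2 * Δ₁ * R + 2 * Δ₂ * R ^ 2 + μ / 4 * R ^ 2 + (2 / 3 * K + M / 4) * R ^ 3 with hB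
  have hB0 : 0 ≤ B := by positivity
  -- for `R = 0` the divisions by `R` in `C` do not matter, since then `B = 0`
  have hBC : B ≤ C * (μ / 2 * R ^ 2) := by
    rcases hR.eq_or_lt with h | h
    · rw [hB, ← h]; simp
    · have e : C * (μ / 2 * R ^ 2) = B + 2 * Δ₁ * ρ := by
        rw [hC, hB, hM]
        field_simp
        ring
      rw [e]
      have : 0 ≤ 2 * Δ₁ * ρ := by positivity
      linarith
  have hAB : A * B ≤ ε / 2 := by
    have h1 : A * (C * D₀) ≤ ε / 2 := by
      have : A * (2 * C * D₀ / ε) = A * (C * D₀) * 2 / ε := by ring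
      rw [this, div_le_one hε] at hAC
      linarith
    have h2 : A * B ≤ A * (C * D₀) := by
      gcongr
      exact hBC.trans (by gcongr)
    linarith
  have hd3 : d ≤ ρ / 800 := by
    have h1 : L₁ * ρ * d ≤ L₁ * ρ * (ρ / 800) := by
      have : α * ε ≤ 4 / 5 * (L₁ / 2 * ρ ^ 2) := by gcongr
      nlinarith
    exact le_of_mul_le_mul_left h1 (by positivity)
  -- all powers of the averaging error are negligible against `ε`
  have hdd : L₁ * d ^ 2 ≤ α ^ 2 * ε / 204800 := by
    have h1 : L₁ * ρ * d ≤ L₁ * ρ * (α * ρ / 640) := by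
      have : α * ε ≤ α * (L₁ / 2 * ρ ^ 2) := by gcongr
      nlinarith
    have h2 : d ≤ α * ρ / 640 := le_of_mul_le_mul_left h1 (by positivity)
    have h3 : ρ * (L₁ * d ^ 2) ≤ ρ * (α ^ 2 * ε / 204800) := by
      calc ρ * (L₁ * d ^ 2) = (L₁ * ρ * d) * d := by ring
        _ ≤ (α * ε / 320) * (α * ρ / 640) := by gcongr
        _ = ρ * (α ^ 2 * ε / 204800) := by ring
    exact le_of_mul_le_mul_left h3 hρ
  have hα2 : α ^ 2 ≤ 1 := by nlinarith
  have m1 : μ * d ^ 2 ≤ ε / 204800 := by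
    have : μ * d ^ 2 ≤ L₁ * d ^ 2 := by gcongr
    have : α ^ 2 * ε ≤ 1 * ε := by gcongr
    linarith
  have gen : ∀ Y : ℝ, 0 ≤ Y → α ^ 2 * Y ≤ μ → Y * d ^ 2 ≤ ε / 204800 := by
    intro Y hY h
    have h1 : L₁ * (Y * d ^ 2) ≤ L₁ * (ε / 204800) := by
      calc L₁ * (Y * d ^ 2) = Y * (L₁ * d ^ 2) := by ring
        _ ≤ Y * (α ^ 2 * ε / 204800) := by gcongr
        _ = (α ^ 2 * Y) * ε / 204800 := by ring
        _ ≤ L₁ * ε / 204800 := by gcongr; linarith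
        _ = L₁ * (ε / 204800) := by ring
    exact le_of_mul_le_mul_left h1 hL₁
  have m2 := gen Δ₂ hΔ₂ (by nlinarith [mul_nonneg (sq_nonneg α) hΔ₂])
  have m3 := gen (K * d) (by positivity) (by linarith)
  have m4 : M * d ^ 3 ≤ ε / 204800 := by
    have : M * d ≤ μ := by
      rw [hM, div_mul_eq_mul_div, div_le_iff₀ hρ]
      gcongr
      linarith
    nlinarith [mul_le_mul_of_nonneg_right this (sq_nonneg d)]
  have m5 : Δ₁ * d ≤ ε / 1000 := by
    have : Δ₁ * d ≤ Δ₁ * (ρ / 800) := by gcongr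
    have : α * ε ≤ 4 / 5 * ε := by gcongr
    nlinarith
  have m6 : Δ₁ * ρ ≤ ε / 100 := by
    have : α * ε ≤ 4 / 5 * ε := by gcongr
    linarith
  have s2 : R' ^ 2 ≤ 1.21 * R ^ 2 + 121 * d ^ 2 :=
    (pow_le_pow_left₀ hR' hRd 2).trans (sq_add_le R d)
  have s3 : R' ^ 3 ≤ 1.331 * R ^ 3 + 1331 * d ^ 3 :=
    (pow_le_pow_left₀ hR' hRd 3).trans (cube_add_le hR hd)
  have hT : Δ₁ * (2 * R' + ρ) + 2 * Δ₂ * R' ^ 2 + 2 / 3 * K * R' ^ 3 + μ / 4 * R' ^ 2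
      + M / 4 * R' ^ 3 ≤ 1.331 * B + ε / 40 := by
    have t1 : Δ₁ * R' ≤ Δ₁ * (R + d) := by gcongr
    have t2 : Δ₂ * R' ^ 2 ≤ Δ₂ * (1.21 * R ^ 2 + 121 * d ^ 2) := by gcongr
    have t3 : μ * R' ^ 2 ≤ μ * (1.21 * R ^ 2 + 121 * d ^ 2) := by gcongr
    have t4 : K * R' ^ 3 ≤ K * (1.331 * R ^ 3 + 1331 * d ^ 3) := by gcongr
    have t5 : M * R' ^ 3 ≤ M * (1.331 * R ^ 3 + 1331 * d ^ 3) := by gcongr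
    have n1 : 0 ≤ Δ₁ * R := by positivity
    have n2 : 0 ≤ Δ₂ * R ^ 2 := by positivity
    have n3 : 0 ≤ μ * R ^ 2 := by positivity
    have e3 : K * d ^ 3 = K * d * d ^ 2 := by ring
    rw [hB]
    linarith
  have hT' := mul_le_mul_of_nonneg_left hT hA
  have : A * (ε / 40) ≤ 1 * (ε / 40) := by gcongr
  linarith

end Scalars

/-! ### The averaged objective -/

section Aggregate

variable {E : Type*} [NormedAddCommGroup E] [InnerProductSpace ℝ E] [FiniteDimensional ℝ E]

theorem hasGradientAt_average {m : ℕ} (f : Fin m → E → ℝ) (hC2 : ∀ i, ContDiff ℝ 2 (f i)) (x : E) :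
    HasGradientAt (fun x => (m : ℝ)⁻¹ * ∑ i, f i x) ((m : ℝ)⁻¹ • ∑ i, gradient (f i) x) x := by
  have h1 : ∀ i, HasFDerivAt (f i) (InnerProductSpace.toDual ℝ E (gradient (f i) x)) x := fun i =>
    (((hC2 i).differentiable (by norm_num)) x).hasGradientAt.hasFDerivAt
  have h2 := (HasFDerivAt.fun_sum (u := Finset.univ) fun i _ => h1 i).const_mul ((m : ℝ)⁻¹)
  rw [hasGradientAt_iff_hasFDerivAt]
  refine h2.congr_fderiv ?_
  rw [map_smul, map_sum]

theorem hasFDerivAt_gradient {f : E → ℝ} (hf : ContDiff ℝ 2 f) (x : E) :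
    HasFDerivAt (gradient f) (hess f x) x := by
  have h1 : Differentiable ℝ (fderiv ℝ f) :=
    (hf.fderiv_right (m := 1) (by norm_num)).differentiable (by norm_num)
  have h2 : Differentiable ℝ (gradient f) := fun y =>
    ((InnerProductSpace.toDual ℝ E).symm.toContinuousLinearEquiv.differentiableAt).comp y (h1 y)
  exact (h2 x).hasFDerivAt

theorem hasFDerivAt_average_gradient {m : ℕ} (f : Fin m → E → ℝ) (hC2 : ∀ i, ContDiff ℝ 2 (f i))
    (x : E) : HasFDerivAt (fun x => (m : ℝ)⁻¹ • ∑ i, gradient (f i) x)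
      ((m : ℝ)⁻¹ • ∑ i, hess (f i) x) x :=
  (HasFDerivAt.fun_sum (u := Finset.univ) fun i _ => hasFDerivAt_gradient (hC2 i) x).const_smul
    ((m : ℝ)⁻¹)

end Aggregate

theorem average_lipschitz {E : Type*} [NormedAddCommGroup E] {V : Type*} [NormedAddCommGroup V]
    [NormedSpace ℝ V] {m : ℕ} (G : Fin m → E → V) (K : Fin m → ℝ)
    (hG : ∀ i x y, ‖G i x - G i y‖ ≤ K i * ‖x - y‖) (hK : ∀ i, 0 ≤ K i) (x y : E) :
    ‖(m : ℝ)⁻¹ • ∑ j, G j x - (m : ℝ)⁻¹ • ∑ j, G j y‖ ≤ ((m : ℝ)⁻¹ * ∑ j, K j) * ‖x - y‖ := by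
  have := norm_sub_average_le G K hG hK (fun _ => x) y ((m : ℝ)⁻¹ • ∑ j, G j x) 0 ‖x - y‖
    (by simp) (fun _ => le_rfl)
  simpa using this

/-! ### One step at a node and averages over the nodes -/

section NodeStep

variable {E : Type*} [NormedAddCommGroup E] [InnerProductSpace ℝ E]

theorem strongConvex_average {m : ℕ} (f : Fin m → E → ℝ) (μ : Fin m → ℝ)
    (hsc : ∀ i, ConvexOn ℝ Set.univ (fun x => f i x - μ i / 2 * ‖x‖ ^ 2)) :
    ConvexOn ℝ Set.univ (fun x => (m : ℝ)⁻¹ * ∑ i, f i x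
      - ((m : ℝ)⁻¹ * ∑ i, μ i) / 2 * ‖x‖ ^ 2) := by
  have h1 : ConvexOn ℝ Set.univ (fun x => ∑ i, (f i x - μ i / 2 * ‖x‖ ^ 2)) := by
    have : ∀ s : Finset (Fin m),
        ConvexOn ℝ Set.univ (fun x => ∑ i ∈ s, (f i x - μ i / 2 * ‖x‖ ^ 2)) := by
      classical
      intro s
      induction s using Finset.induction_on with
      | empty => simpa using convexOn_const (0 : ℝ) convex_univ
      | insert i s hi ih =>
        simp only [Finset.sum_insert hi]
        exact (hsc i).add ih
    exact this _
  refine (h1.smul (show (0 : ℝ) ≤ (m : ℝ)⁻¹ by positivity)).congr fun x _ => ?_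
  simp only [smul_eq_mul, Finset.sum_sub_distrib, ← Finset.sum_mul, ← Finset.sum_div]
  ring

/-- One step of the estimating-sequence argument at a single node. `P`, `Pn` stand for the minimal
values of the estimating function before and after the step, and `T`, `Tn` for the accumulated
effect of the gradient errors at the minimizer `xstar`. The term `⟪g xn, v - vb⟫` only becomes
small after averaging over the nodes. -/
theorem node_step {F : E → ℝ} {g : E → E} {H : E → E →L[ℝ] E} {K Δ₁ Δ₂ μ α ρ A P Py Pn T Tn : ℝ}
    {B d η : ℝ} (hg : ∀ x, HasFDerivAt g (H x) x) (hH : ∀ x y, ‖H x - H y‖ ≤ K * ‖x - y‖)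
    (hfo : ∀ x y, F x + ⟪g x, y - x⟫ ≤ F y)
    {xk yk xn yn v vh vb gv gn xstar : E} {Hv : E →L[ℝ] E}
    (hK : 0 ≤ K) (hα : 0 < α) (hα1 : α ≤ 4 / 5) (hμ : 0 < μ)
    (hΔα : 60 * α ^ 2 * Δ₂ ≤ μ) (hKα : 160 * K * ρ * α ^ 3 ≤ 3 * μ)
    (h1 : ‖gv - g vh‖ ≤ Δ₁) (h2 : ‖Hv - H vh‖ ≤ Δ₂)
    (hst : gv + Hv (xn - vh) + (3 * Δ₂ + 3 * K / 2 * ‖xn - vh‖) • (xn - vh) = 0)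
    (hA : 0 < A) (hA1 : A ≤ 1)
    (hv : v = (1 - α) • xk + α • yk) (hvh : ‖vh - vb‖ ≤ d)
    (hgrow : P + (μ * (1 / A - 1 / 2)) / 2 * ‖yn - yk‖ ^ 2 ≤ Py)
    (hPn : Pn = Py + α / (A * (1 - α)) * (F xn + ⟪gn, yn - xn⟫ + μ / 2 * ‖yn - xn‖ ^ 2))
    (hTn : Tn = T + α / (A * (1 - α)) * ⟪gn - g xn, xstar - xn⟫)
    (he : ‖gn - g xn‖ ≤ η) (hB : ‖g xn‖ ≤ B) (hxv : ‖xn - vh‖ ≤ 2 * ρ)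
    (hyy : ‖yn - yk‖ ≤ 2 * ρ) (hyx : ‖yn - xstar‖ ≤ ρ) :
    (1 - α) * (A * (P - T) - F xk) + ⟪g xn, v - vb⟫
      - (B * d + 2 * ρ * (1 + α) * Δ₁ + α * (η * ρ)) ≤ A * (1 - α) * (Pn - Tn) - F xn := by
  have hp : 0 < 1 - α := by linarith
  have hprog := cubic_step_progress (d := yn - yk) hg hH h1 h2 hst hK hα.le hμ hΔα hKα hxv hyy
  rw [add_sub_cancel] at hprog
  have e1 : A * (1 - α) * (Pn - Tn) = A * (1 - α) * (Py - T)
      + α * (F xn + ⟪gn, yn - xn⟫ + μ / 2 * ‖yn - xn‖ ^ 2 - ⟪gn - g xn, xstar - xn⟫) := by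
    rw [hPn, hTn]
    field_simp
    ring
  have e2 : (1 - α) * (A * (P - T)) + μ / 20 * ‖yn - yk‖ ^ 2 ≤ A * (1 - α) * (Py - T) := by
    have a1 := mul_le_mul_of_nonneg_left hgrow (show 0 ≤ A * (1 - α) by positivity)
    have a2 : A * (1 - α) * (P + (μ * (1 / A - 1 / 2)) / 2 * ‖yn - yk‖ ^ 2)
        = A * (1 - α) * P + (1 - α) * (1 - A / 2) * (μ / 2 * ‖yn - yk‖ ^ 2) := by
      field_simp
    have a3 : 1 / 10 ≤ (1 - α) * (1 - A / 2) := by nlinarith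
    have a4 := mul_le_mul_of_nonneg_right a3 (show 0 ≤ μ / 2 * ‖yn - yk‖ ^ 2 by positivity)
    linarith
  have e3 : ⟪gn, yn - xn⟫ - ⟪gn - g xn, xstar - xn⟫
      = ⟪g xn, yn - xn⟫ + ⟪gn - g xn, yn - xstar⟫ := by
    simp only [inner_sub_left, inner_sub_right]; ring
  have e4 : -(η * ρ) ≤ ⟪gn - g xn, yn - xstar⟫ := by
    have a1 := (abs_le.1 (abs_real_inner_le_norm (gn - g xn) (yn - xstar))).1
    have a2 : ‖gn - g xn‖ * ‖yn - xstar‖ ≤ η * ρ :=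
      mul_le_mul he hyx (norm_nonneg _) ((norm_nonneg _).trans he)
    linarith
  have e5 : -(B * d) ≤ ⟪g xn, vb - vh⟫ := by
    have a1 := (abs_le.1 (abs_real_inner_le_norm (g xn) (vb - vh))).1
    rw [norm_sub_rev] at a1
    have a2 : ‖g xn‖ * ‖vh - vb‖ ≤ B * d :=
      mul_le_mul hB hvh (norm_nonneg _) ((norm_nonneg _).trans hB)
    linarith
  have e6 := mul_le_mul_of_nonneg_left (hfo xn xk) hp.le
  have e7 : (1 - α) * ⟪g xn, xk - xn⟫ + α * ⟪g xn, yn - xn⟫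
      = ⟪g xn, v - vb⟫ + ⟪g xn, vb - vh⟫ + ⟪g xn, -(xn - vh)⟫ + α * ⟪g xn, yn - yk⟫ := by
    rw [hv]
    simp only [inner_sub_right, inner_add_right, inner_neg_right, real_inner_smul_right]; ring
  have e8 := mul_le_mul_of_nonneg_left e4 hα.le
  have e9 : 0 ≤ α * (μ / 2 * ‖yn - xn‖ ^ 2) := by positivity
  have e10 : α * ⟪gn, yn - xn⟫ - α * ⟪gn - g xn, xstar - xn⟫
      = α * ⟪g xn, yn - xn⟫ + α * ⟪gn - g xn, yn - xstar⟫ := by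
    rw [← mul_sub, e3, mul_add]
  rw [e1]
  linarith

theorem jensen_average {m : ℕ} (hm : 1 ≤ m) {F : E → ℝ} {g : E → E}
    (hfo : ∀ x y, F x + ⟪g x, y - x⟫ ≤ F y) (p : Fin m → E) :
    F ((m : ℝ)⁻¹ • ∑ i, p i) ≤ (m : ℝ)⁻¹ * ∑ i, F (p i) := by
  have hm0 : (0 : ℝ) < m := by exact_mod_cast hm
  set c := (m : ℝ)⁻¹ • ∑ i, p i with hc
  have h1 : ∑ i, (F c + ⟪g c, p i - c⟫) ≤ ∑ i, F (p i) := Finset.sum_le_sum fun i _ => hfo c (p i)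
  have h2 : ∑ i, (p i - c) = 0 := by
    rw [Finset.sum_sub_distrib]
    simp [hc, ← Nat.cast_smul_eq_nsmul ℝ, smul_smul, hm0.ne']
  rw [Finset.sum_add_distrib, ← inner_sum, h2, inner_zero_right, add_zero] at h1
  simp only [Finset.sum_const, Finset.card_univ, Fintype.card_fin, nsmul_eq_mul] at h1
  rw [inv_mul_eq_div, le_div_iff₀ hm0]
  linarith

/-- The disagreement `v i - v̄` has zero mean, so that it only meets the variation of the
gradients over the nodes. -/
theorem disagreement_le {m : ℕ} (hm : 1 ≤ m) (G v : Fin m → E) (a b : ℝ)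
    (hG : ∀ i j, ‖G i - G j‖ ≤ a) (hv : ∀ i, ‖v i - (m : ℝ)⁻¹ • ∑ j, v j‖ ≤ b) :
    -(m * (a * b)) ≤ ∑ i, ⟪G i, v i - (m : ℝ)⁻¹ • ∑ j, v j⟫ := by
  have hm0 : (0 : ℝ) < m := by exact_mod_cast hm
  set c := (m : ℝ)⁻¹ • ∑ j, v j with hc
  have h2 : ∑ i, (v i - c) = 0 := by
    rw [Finset.sum_sub_distrib]
    simp [hc, ← Nat.cast_smul_eq_nsmul ℝ, smul_smul, hm0.ne']
  let i₀ : Fin m := ⟨0, hm⟩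
  have h3 : ∑ i, ⟪G i, v i - c⟫ = ∑ i, ⟪G i - G i₀, v i - c⟫ := by
    simp only [inner_sub_left (𝕜 := ℝ) (G _)]
    rw [Finset.sum_sub_distrib, ← inner_sum, h2, inner_zero_right, sub_zero]
  rw [h3]
  have h4 : ∑ _i : Fin m, -(a * b) ≤ ∑ i, ⟪G i - G i₀, v i - c⟫ := by
    refine Finset.sum_le_sum fun i _ => ?_
    have a1 := (abs_le.1 (abs_real_inner_le_norm (G i - G i₀) (v i - c))).1
    have a2 : ‖G i - G i₀‖ * ‖v i - c‖ ≤ a * b :=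
      mul_le_mul (hG i i₀) (hv i) (norm_nonneg _) ((norm_nonneg _).trans (hG i i₀))
    linarith
  simpa using h4

theorem norm_average_sub_le {m : ℕ} (hm : 1 ≤ m) (p : Fin m → E) (z : E) (r : ℝ)
    (h : ∀ i, ‖p i - z‖ ≤ r) : ‖(m : ℝ)⁻¹ • ∑ i, p i - z‖ ≤ r := by
  have hm0 : (0 : ℝ) < m := by exact_mod_cast hm
  have e : (m : ℝ)⁻¹ • ∑ i, p i - z = (m : ℝ)⁻¹ • ∑ i, (p i - z) := by
    rw [Finset.sum_sub_distrib, smul_sub]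
    simp [← Nat.cast_smul_eq_nsmul ℝ, smul_smul, hm0.ne']
  have h1 : ‖∑ i, (p i - z)‖ ≤ ∑ _i : Fin m, r := norm_sum_le_of_le _ fun i _ => h i
  rw [e, norm_smul, norm_inv, Real.norm_of_nonneg hm0.le, inv_mul_le_iff₀ hm0]
  simpa using h1

end NodeStep

/-! ### The guarantee -/

set_option maxHeartbeats 4000000 in
/-- **ε-solution guarantee for Accelerated Decentralized Cubic Newton**
(Theorem 3 / acc_delta_choice). -/
theorem acc_decentralized_cubic_newton_eps_solution
    {E : Type*} [NormedAddCommGroup E] [InnerProductSpace ℝ E] [FiniteDimensional ℝ E]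
    {m : ℕ} (hm : 1 ≤ m)
    (f : Fin m → E → ℝ)
    (hC2 : ∀ i, ContDiff ℝ 2 (f i))
    (L1 L2 : Fin m → ℝ)
    (hL1 : ∀ i (x y : E), ‖gradient (f i) x - gradient (f i) y‖ ≤ L1 i * ‖x - y‖)
    (hL2 : ∀ i (x y : E), ‖hess (f i) x - hess (f i) y‖ ≤ L2 i * ‖x - y‖)
    -- each f_i is μ_i-strongly convex with μ_i > 0
    (μ : Fin m → ℝ) (hμpos : ∀ i, 0 < μ i)
    (hsc : ∀ i, ConvexOn ℝ Set.univ (fun x => f i x - μ i / 2 * ‖x‖ ^ 2))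
    (F : E → ℝ) (hF : F = fun x => (m : ℝ)⁻¹ * ∑ i, f i x)
    (L1bar L2bar μbar : ℝ)
    (hL1bar : L1bar = (m : ℝ)⁻¹ * ∑ i, L1 i)
    (hL2bar : L2bar = (m : ℝ)⁻¹ * ∑ i, L2 i)
    (hμbar : μbar = (m : ℝ)⁻¹ * ∑ i, μ i)
    (μhat : ℝ) (hμhat : IsLeast (Set.range μ) μhat)
    -- the global minimizer of F
    (xstar : E) (hstar : ∀ y, F xstar ≤ F y)
    -- total number of iterations, radius, consensus error sequences
    (N : ℕ) (Rbar : ℝ) (hRbar : 0 < Rbar)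
    (Δv Δg ΔH Δgx : ℕ → ℝ)
    -- the desired accuracy and the constant coefficient α
    (ε : ℝ) (hε : 0 < ε)
    (α : ℝ)
    (hα : α = min (4 / 5) ((3 * μbar / Rbar / (160 * L2bar)) ^ ((1 : ℝ) / 3)))
    -- bounds on the consensus errors
    (hΔH : ∀ k ≤ N, ΔH k ≤
      min (μbar / (60 * Real.sqrt 5 * α ^ 2)) (α * μhat * ε / (320 * L1bar * Rbar ^ 2)))
    (hΔg : ∀ k ≤ N, Δg k ≤
      min (α * μhat * ε / (160 * L1bar * Rbar)) (α * ε / (160 * Rbar)))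
    (hΔv : ∀ k ≤ N, Δv k ≤
      min (μbar / (120 * Real.sqrt 5 * α ^ 2 * L2bar)) (α * ε / (320 * L1bar * Rbar)))
    (hΔgx : ∀ k ≤ N, Δgx (k + 1) ≤ ε / (8 * Rbar))
    -- algorithm parameters
    (L : ℝ) (hL : L = 3 * L2bar)
    (δ2 : ℕ → ℝ) (hδ2 : ∀ k, δ2 k = 3 * (ΔH k + 2 * L2bar * Δv k))
    -- the trajectory
    (x0 : E)
    (xs ys vs vhs : ℕ → Fin m → E)
    (hinit : ∀ i, xs 0 i = x0 ∧ ys 0 i = x0 ∧ vs 0 i = x0)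
    (hvk : ∀ k, 1 ≤ k → k ≤ N → ∀ i, vs k i = (1 - α) • xs k i + α • ys k i)
    (hvhs : ∀ k ≤ N, ∀ i, ‖vhs k i - (m : ℝ)⁻¹ • ∑ j, vs k j‖ ≤ Δv k)
    (gv : ℕ → Fin m → E)
    (hgv : ∀ k ≤ N, ∀ i, ‖gv k i - (m : ℝ)⁻¹ • ∑ j, gradient (f j) (vhs k j)‖ ≤ Δg k)
    (Hv : ℕ → Fin m → E →L[ℝ] E)
    (hHsym : ∀ k ≤ N, ∀ i, ∀ v w : E, ⟪Hv k i v, w⟫ = ⟪v, Hv k i w⟫)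
    (hHv : ∀ k ≤ N, ∀ i, ‖Hv k i - (m : ℝ)⁻¹ • ∑ j, hess (f j) (vhs k j)‖ ≤ ΔH k)
    (hHpd : ∀ k ≤ N, ∀ i, ∀ v : E, μhat * ‖v‖ ^ 2 ≤ ⟪Hv k i v, v⟫)
    -- x_i^{k+1} is a global minimizer of the accelerated cubic model ν̂_i^k
    (ν : ℕ → Fin m → E → ℝ)
    (hν : ∀ k i y, ν k i y =
      ⟪gv k i, y - vhs k i⟫ + (1 / 2) * ⟪Hv k i (y - vhs k i), y - vhs k i⟫
        + (δ2 k / 2) * ‖y - vhs k i‖ ^ 2 + (L / 6) * ‖y - vhs k i‖ ^ 3)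
    (hstep : ∀ k ≤ N, ∀ i, ∀ y, ν k i (xs (k + 1) i) ≤ ν k i y)
    -- inexact averaged gradients at the new iterates
    (gx : ℕ → Fin m → E)
    (hgx : ∀ k ≤ N, ∀ i,
      ‖gx (k + 1) i - (m : ℝ)⁻¹ • ∑ j, gradient (f j) (xs (k + 1) j)‖ ≤ Δgx (k + 1))
    -- y_i^{k+1} is the global minimizer of the estimating function ψ_i^{k+1}
    (ψ : ℕ → Fin m → E → ℝ)
    (hψ : ∀ k, ∀ i, ∀ x : E, ψ (k + 1) i x =
      F (xs 1 i) + ((μbar / 2) / 2) * ‖x - vhs 0 i‖ ^ 2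
        + (((3 / 2) * μbar / Rbar) / 6) * ‖x - vhs 0 i‖ ^ 3
        + ∑ j ∈ Finset.Icc 1 k, (α / (1 - α) ^ j) *
            (F (xs (j + 1) i) + ⟪gx (j + 1) i, x - xs (j + 1) i⟫
              + (μbar / 2) * ‖x - xs (j + 1) i‖ ^ 2))
    (hymin : ∀ k ≤ N, ∀ i, ∀ x : E, ψ (k + 1) i (ys (k + 1) i) ≤ ψ (k + 1) i x)
    -- the averaged iterates
    (xbar : ℕ → E) (hxbar : ∀ k, xbar k = (m : ℝ)⁻¹ • ∑ i, xs k i)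
    -- boundedness of the trajectory
    (hbound : ∀ k, 1 ≤ k → k ≤ N + 1 → ∀ i,
      ‖xs k i - xstar‖ ≤ Rbar ∧ ‖ys k i - xstar‖ ≤ Rbar ∧
        ‖vs k i - xstar‖ ≤ Rbar ∧ ‖vhs k i - xstar‖ ≤ Rbar)
    -- the number of iterations is large enough
    (C R : ℝ) (hR : R = ‖x0 - xstar‖)
    (hC : C = 4 * (Δg 0 + 2 * L1bar * Δv 0) / (μbar * R)
        + 4 * (Δg 0 + 2 * L1bar * Δv 0) * Rbar / (μbar * R ^ 2)
        + 4 * (ΔH 0 + 2 * L2bar * Δv 0) / μbar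
        + 1 / 2
        + ((8 * L2bar + 3 * μbar / Rbar) / (6 * μbar)) * R)
    (hN : ⌈Real.log (2 * C * (F (xbar 0) - F xstar) / ε) / Real.log (1 / (1 - α))⌉
        ≤ (N : ℤ)) :
    F (xbar (N + 1)) - F xstar ≤ ε := by
  have hm0 : (0 : ℝ) < m := by exact_mod_cast hm
  let i₀ : Fin m := ⟨0, hm⟩
  rcases subsingleton_or_nontrivial E with hE | hE
  · rw [Subsingleton.elim (xbar (N + 1)) xstar, sub_self]
    exact hε.le
  -- calculus of the averaged objective
  obtain ⟨p, q, hpq⟩ := exists_pair_ne E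
  have hpq0 : 0 < ‖p - q‖ := norm_pos_iff.2 (sub_ne_zero.2 hpq)
  have hL1nn : ∀ i, 0 ≤ L1 i := fun i =>
    nonneg_of_mul_nonneg_left ((norm_nonneg _).trans (hL1 i p q)) hpq0
  have hL2nn : ∀ i, 0 ≤ L2 i := fun i =>
    nonneg_of_mul_nonneg_left ((norm_nonneg _).trans (hL2 i p q)) hpq0
  let g : E → E := fun x => (m : ℝ)⁻¹ • ∑ j, gradient (f j) x
  let H : E → E →L[ℝ] E := fun x => (m : ℝ)⁻¹ • ∑ j, hess (f j) x
  have hFg : ∀ x, HasGradientAt F (g x) x := fun x => by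
    rw [hF]; exact hasGradientAt_average f hC2 x
  have hgH : ∀ x, HasFDerivAt g (H x) x := hasFDerivAt_average_gradient f hC2
  have hgl : ∀ x y, ‖g x - g y‖ ≤ L1bar * ‖x - y‖ := fun x y => by
    rw [hL1bar]; exact average_lipschitz (fun j => gradient (f j)) L1 hL1 hL1nn x y
  have hHl : ∀ x y, ‖H x - H y‖ ≤ L2bar * ‖x - y‖ := fun x y => by
    rw [hL2bar]; exact average_lipschitz (fun j => hess (f j)) L2 hL2 hL2nn x y
  have hFsc : ConvexOn ℝ Set.univ (fun x => F x - μbar / 2 * ‖x‖ ^ 2) := by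
    rw [hF, hμbar]; exact strongConvex_average f μ hsc
  have hfo2 : ∀ x y, F x + ⟪g x, y - x⟫ + μbar / 2 * ‖y - x‖ ^ 2 ≤ F y := fun x y =>
    first_order_of_strongConvex hFsc (hFg x) y
  have hμ : 0 < μbar := by
    rw [hμbar]
    exact mul_pos (inv_pos.2 hm0) (Finset.sum_pos (fun i _ => hμpos i) ⟨i₀, Finset.mem_univ _⟩)
  have hfo : ∀ x y, F x + ⟪g x, y - x⟫ ≤ F y := fun x y => by
    have := hfo2 x y
    have : 0 ≤ μbar / 2 * ‖y - x‖ ^ 2 := by positivity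
    linarith
  have hμh : 0 < μhat := by
    obtain ⟨i, hi⟩ := hμhat.1
    rw [← hi]; exact hμpos i
  have hup : ∀ x h, F (x + h) - F x - ⟪g x, h⟫ ≤ L1bar / 2 * ‖h‖ ^ 2 :=
    value_le_of_lipschitz_gradient hFg hgl
  have hμL : μbar ≤ L1bar := by
    have h1 := hfo2 q p
    have h2 := hup q (p - q)
    rw [add_sub_cancel] at h2
    have h3 : μbar * ‖p - q‖ ^ 2 ≤ L1bar * ‖p - q‖ ^ 2 := by linarith
    exact le_of_mul_le_mul_right h3 (by positivity)
  have hL1pos : 0 < L1bar := hμ.trans_le hμL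
  have hL2bnn : 0 ≤ L2bar := by
    rw [hL2bar]
    exact mul_nonneg (inv_nonneg.2 hm0.le) (Finset.sum_nonneg fun i _ => hL2nn i)
  have hgstar : g xstar = 0 := by
    have hloc : IsLocalMin F xstar := Filter.Eventually.of_forall hstar
    have := hloc.hasFDerivAt_eq_zero (hFg xstar).hasFDerivAt
    simpa using this
  have hgb : ∀ x, ‖g x‖ ≤ L1bar * ‖x - xstar‖ := fun x => by
    simpa [hgstar] using hgl x xstar
  have hjensen : F (xbar (N + 1)) ≤ (m : ℝ)⁻¹ * ∑ i, F (xs (N + 1) i) := by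
    rw [hxbar]; exact jensen_average hm hfo _
  -- the consensus errors
  have hv0 : ∀ k ≤ N, 0 ≤ Δv k := fun k hk => (norm_nonneg _).trans (hvhs k hk i₀)
  have hg0 : ∀ k ≤ N, 0 ≤ Δg k := fun k hk => (norm_nonneg _).trans (hgv k hk i₀)
  have hH0 : ∀ k ≤ N, 0 ≤ ΔH k := fun k hk => (norm_nonneg _).trans (hHv k hk i₀)
  have hvv : ∀ k ≤ N, ∀ i j, ‖vhs k j - vhs k i‖ ≤ 2 * Δv k := fun k hk i j => by
    have h1 := hvhs k hk j
    have h2 := hvhs k hk i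
    rw [norm_sub_rev] at h2
    calc ‖vhs k j - vhs k i‖ = ‖(vhs k j - (m : ℝ)⁻¹ • ∑ j, vs k j)
          + ((m : ℝ)⁻¹ • ∑ j, vs k j - vhs k i)‖ := by congr 1; abel
      _ ≤ 2 * Δv k := (norm_add_le _ _).trans (by linarith)
  have hΔ1 : ∀ k ≤ N, ∀ i, ‖gv k i - g (vhs k i)‖ ≤ Δg k + 2 * L1bar * Δv k := fun k hk i => by
    have := norm_sub_average_le (fun j => gradient (f j)) L1 hL1 hL1nn (vhs k) (vhs k i) (gv k i)
      (Δg k) (2 * Δv k) (hgv k hk i) (hvv k hk i)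
    rw [← hL1bar] at this
    exact this.trans (by linarith)
  have hΔ2 : ∀ k ≤ N, ∀ i, ‖Hv k i - H (vhs k i)‖ ≤ ΔH k + 2 * L2bar * Δv k := fun k hk i => by
    have := norm_sub_average_le (fun j => hess (f j)) L2 hL2 hL2nn (vhs k) (vhs k i) (Hv k i)
      (ΔH k) (2 * Δv k) (hHv k hk i) (hvv k hk i)
    rw [← hL2bar] at this
    exact this.trans (by linarith)
  obtain ⟨D1, hD1⟩ : ∃ D1 : ℕ → ℝ, ∀ k, D1 k = Δg k + 2 * L1bar * Δv k := ⟨_, fun _ => rfl⟩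
  obtain ⟨D2, hD2⟩ : ∃ D2 : ℕ → ℝ, ∀ k, D2 k = ΔH k + 2 * L2bar * Δv k := ⟨_, fun _ => rfl⟩
  simp only [← hD1] at hΔ1 hC
  simp only [← hD2] at hΔ2 hδ2 hC
  -- the cubic step in the displacement variable
  have hmin : ∀ k ≤ N, ∀ i, ∀ w : E,
      ⟪gv k i, xs (k + 1) i - vhs k i⟫
        + (1 / 2) * ⟪Hv k i (xs (k + 1) i - vhs k i), xs (k + 1) i - vhs k i⟫
        + (3 * D2 k / 2) * ‖xs (k + 1) i - vhs k i‖ ^ 2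
        + (3 * L2bar / 6) * ‖xs (k + 1) i - vhs k i‖ ^ 3 ≤
      ⟪gv k i, w⟫ + (1 / 2) * ⟪Hv k i w, w⟫ + (3 * D2 k / 2) * ‖w‖ ^ 2
        + (3 * L2bar / 6) * ‖w‖ ^ 3 := fun k hk i w => by
    have := hstep k hk i (vhs k i + w)
    rw [hν, hν, hδ2, hL, add_sub_cancel_left] at this
    exact this
  have hst : ∀ k ≤ N, ∀ i, gv k i + Hv k i (xs (k + 1) i - vhs k i)
      + (3 * D2 k + 3 * L2bar / 2 * ‖xs (k + 1) i - vhs k i‖) • (xs (k + 1) i - vhs k i) = 0 :=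
    fun k hk i => cubic_model_stationary (hHsym k hk i) (hmin k hk i)
  have hval : ∀ k ≤ N, ∀ i, F (xs (k + 1) i) - F xstar ≤
      D1 k * (‖xstar - vhs k i‖ + ‖xs (k + 1) i - vhs k i‖)
        + 2 * D2 k * ‖xstar - vhs k i‖ ^ 2 + 2 / 3 * L2bar * ‖xstar - vhs k i‖ ^ 3 :=
    fun k hk i => by
      have := cubic_step_value hFg hgH hHl hL2bnn (hΔ1 k hk i) (hΔ2 k hk i) (hmin k hk i)
        (xstar - vhs k i)
      rwa [add_sub_cancel, add_sub_cancel] at this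
  -- degenerate case of constant Hessians: `α = 0` by the convention `x / 0 = 0`, all errors vanish
  -- and a single step is an exact Newton step on a quadratic
  rcases hL2bnn.eq_or_lt with hL20 | hL2pos
  · have hα0 : α = 0 := by
      rw [hα, ← hL20]
      norm_num
    have zv : Δv N = 0 := le_antisymm (by
      have := (hΔv N le_rfl).trans (min_le_right _ _)
      simpa [hα0] using this) (hv0 N le_rfl)
    have zg : Δg N = 0 := le_antisymm (by
      have := (hΔg N le_rfl).trans (min_le_right _ _)
      simpa [hα0] using this) (hg0 N le_rfl)
    have zH : ΔH N = 0 := le_antisymm (by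
      have := (hΔH N le_rfl).trans (min_le_right _ _)
      simpa [hα0] using this) (hH0 N le_rfl)
    have h1 : ∀ i, F (xs (N + 1) i) ≤ F xstar := fun i => by
      have := hval N le_rfl i
      rw [hD1, hD2, zv, zg, zH, ← hL20] at this
      simp at this
      linarith
    have h2 : ∑ i, F (xs (N + 1) i) ≤ ∑ _i : Fin m, F xstar := Finset.sum_le_sum fun i _ => h1 i
    simp only [Finset.sum_const, Finset.card_univ, Fintype.card_fin, nsmul_eq_mul] at h2
    have h3 := mul_le_mul_of_nonneg_left h2 (inv_nonneg.2 hm0.le)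
    rw [inv_mul_cancel_left₀ hm0.ne'] at h3
    linarith
  have hα0 : 0 < α := by
    rw [hα]
    exact lt_min (by norm_num) (Real.rpow_pos_of_pos (by positivity) _)
  have hα45 : α ≤ 4 / 5 := by rw [hα]; exact min_le_left _ _
  have hα3 : 160 * L2bar * Rbar * α ^ 3 ≤ 3 * μbar := by
    have hb : 0 ≤ 3 * μbar / Rbar / (160 * L2bar) := by positivity
    have h1 : α ≤ (3 * μbar / Rbar / (160 * L2bar)) ^ ((1 : ℝ) / 3) := by
      rw [hα]; exact min_le_right _ _
    have h2 : α ^ 3 ≤ 3 * μbar / Rbar / (160 * L2bar) := by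
      calc α ^ 3 ≤ ((3 * μbar / Rbar / (160 * L2bar)) ^ ((1 : ℝ) / 3)) ^ 3 := by gcongr
        _ = 3 * μbar / Rbar / (160 * L2bar) := by
          rw [← Real.rpow_natCast, ← Real.rpow_mul hb]
          norm_num
    rw [div_div, le_div_iff₀ (by positivity)] at h2
    linarith
  clear hα
  -- a large `ε` is reached because the last iterates stay in the ball of radius `Rbar`
  rcases le_or_gt (L1bar / 2 * Rbar ^ 2) ε with hεL | hεL
  · have h1 := hup xstar (xbar (N + 1) - xstar)
    rw [add_sub_cancel, hgstar, inner_zero_left] at h1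
    have h2 : ‖xbar (N + 1) - xstar‖ ≤ Rbar := by
      rw [hxbar]
      exact norm_average_sub_le hm _ _ _ fun i => (hbound (N + 1) (by omega) le_rfl i).1
    have h3 : L1bar / 2 * ‖xbar (N + 1) - xstar‖ ^ 2 ≤ L1bar / 2 * Rbar ^ 2 := by gcongr
    linarith
  -- consensus errors in division-free form
  have h5 : (2 : ℝ) ≤ Real.sqrt 5 := Real.le_sqrt_of_sq_le (by norm_num)
  have bv1 : ∀ k ≤ N, L1bar * Rbar * Δv k ≤ α * ε / 320 := fun k hk => by
    have := (hΔv k hk).trans (min_le_right _ _)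
    rw [le_div_iff₀ (by positivity)] at this
    linarith
  have bv2 : ∀ k ≤ N, α ^ 2 * (L2bar * Δv k) ≤ μbar / 240 := fun k hk => by
    have := (hΔv k hk).trans (min_le_left _ _)
    rw [le_div_iff₀ (by positivity)] at this
    have h0 : 0 ≤ α ^ 2 * (L2bar * Δv k) := mul_nonneg (by positivity)
      (mul_nonneg hL2bnn (hv0 k hk))
    nlinarith [mul_le_mul_of_nonneg_right h5 h0]
  have bg1 : ∀ k ≤ N, L1bar * Rbar * Δg k ≤ α * μhat * ε / 160 := fun k hk => by
    have := (hΔg k hk).trans (min_le_left _ _)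
    rw [le_div_iff₀ (by positivity)] at this
    linarith
  have bg2 : ∀ k ≤ N, Rbar * Δg k ≤ α * ε / 160 := fun k hk => by
    have := (hΔg k hk).trans (min_le_right _ _)
    rw [le_div_iff₀ (by positivity)] at this
    linarith
  have bH1 : ∀ k ≤ N, L1bar * Rbar ^ 2 * ΔH k ≤ α * μhat * ε / 320 := fun k hk => by
    have := (hΔH k hk).trans (min_le_right _ _)
    rw [le_div_iff₀ (by positivity)] at this
    linarith
  have bH2 : ∀ k ≤ N, α ^ 2 * ΔH k ≤ μbar / 120 := fun k hk => by
    have := (hΔH k hk).trans (min_le_left _ _)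
    rw [le_div_iff₀ (by positivity)] at this
    have h0 : 0 ≤ α ^ 2 * ΔH k := mul_nonneg (by positivity) (hH0 k hk)
    nlinarith [mul_le_mul_of_nonneg_right h5 h0]
  have bD1 : ∀ k ≤ N, D1 k * Rbar ≤ α * ε / 80 := fun k hk => by
    rw [hD1]; linarith [bg2 k hk, bv1 k hk]
  have bD2 : ∀ k ≤ N, 60 * α ^ 2 * D2 k ≤ μbar := fun k hk => by
    rw [hD2]; linarith [bH2 k hk, bv2 k hk]
  have hD10 : ∀ k ≤ N, 0 ≤ D1 k := fun k hk => (norm_nonneg _).trans (hΔ1 k hk i₀)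
  have hD20 : ∀ k ≤ N, 0 ≤ D2 k := fun k hk => (norm_nonneg _).trans (hΔ2 k hk i₀)
  have hdist : ∀ a b : E, ‖a - xstar‖ ≤ Rbar → ‖b - xstar‖ ≤ Rbar → ‖a - b‖ ≤ 2 * Rbar := by
    intro a b ha hb
    calc ‖a - b‖ = ‖(a - xstar) - (b - xstar)‖ := by congr 1; abel
      _ ≤ 2 * Rbar := (norm_sub_le _ _).trans (by linarith)
  -- consensus of the new iterates
  have hcons : ∀ k, 1 ≤ k → k ≤ N → ∀ i j,
      L1bar * ‖xs (k + 1) i - xs (k + 1) j‖ * Rbar ≤ α * ε / 32 := by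
    intro k hk1 hk i j
    have b1 := fun i => (hbound (k + 1) (by omega) (by omega) i).1
    have b2 := fun i => (hbound k hk1 (by omega) i).2.2.2
    have c1 : ‖gv k i - gv k j‖ ≤ 2 * Δg k := by
      have a1 := hgv k hk i
      have a2 := hgv k hk j
      rw [norm_sub_rev] at a2
      calc ‖gv k i - gv k j‖ = ‖(gv k i - (m : ℝ)⁻¹ • ∑ j, gradient (f j) (vhs k j))
            + ((m : ℝ)⁻¹ • ∑ j, gradient (f j) (vhs k j) - gv k j)‖ := by congr 1; abel
        _ ≤ 2 * Δg k := (norm_add_le _ _).trans (by linarith)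
    have c2 : ‖Hv k i - Hv k j‖ ≤ 2 * ΔH k := by
      have a1 := hHv k hk i
      have a2 := hHv k hk j
      rw [norm_sub_rev] at a2
      calc ‖Hv k i - Hv k j‖ = ‖(Hv k i - (m : ℝ)⁻¹ • ∑ j, hess (f j) (vhs k j))
            + ((m : ℝ)⁻¹ • ∑ j, hess (f j) (vhs k j) - Hv k j)‖ := by congr 1; abel
        _ ≤ 2 * ΔH k := (norm_add_le _ _).trans (by linarith)
    have c3 := cubic_step_stable (δ := 3 * D2 k) (L := 3 * L2bar) (by linarith [hD20 k hk])
      (by linarith) (hHpd k hk i) (hst k hk i) (hst k hk j) c1 c2 (hdist _ _ (b1 j) (b2 j))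
    set w := xs (k + 1) i - vhs k i - (xs (k + 1) j - vhs k j) with hw
    have c4 : L1bar * Rbar * ‖w‖ ≤ α * ε / 40 := by
      have : μhat * (L1bar * Rbar * ‖w‖) ≤ μhat * (α * ε / 40) := by
        have a1 := mul_le_mul_of_nonneg_left c3 (show 0 ≤ L1bar * Rbar by positivity)
        linarith [bg1 k hk, bH1 k hk]
      exact le_of_mul_le_mul_left this hμh
    have c5 : ‖xs (k + 1) i - xs (k + 1) j‖ ≤ ‖w‖ + 2 * Δv k := by
      calc ‖xs (k + 1) i - xs (k + 1) j‖ = ‖w + (vhs k i - vhs k j)‖ := by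
            rw [hw]; congr 1; abel
        _ ≤ ‖w‖ + 2 * Δv k := (norm_add_le _ _).trans (by linarith [hvv k hk j i])
    have c6 := mul_le_mul_of_nonneg_left c5 (show 0 ≤ L1bar * Rbar by positivity)
    linarith [bv1 k hk]
  have hp : 0 < 1 - α := by linarith
  -- effect at `xstar` of the gradient errors in the estimating functions
  let T : ℕ → Fin m → ℝ := fun k i => ∑ j ∈ Finset.Icc 1 k, α / (1 - α) ^ j *
    ⟪gx (j + 1) i - g (xs (j + 1) i), xstar - xs (j + 1) i⟫
  have hTs : ∀ k i, T (k + 1) i = T k i + α / ((1 - α) ^ k * (1 - α)) *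
      ⟪gx (k + 2) i - g (xs (k + 2) i), xstar - xs (k + 2) i⟫ := fun k i => by
    simp only [T]
    rw [Finset.sum_Icc_succ_top (by omega), pow_succ]
  have hψs : ∀ k i x, ψ (k + 2) i x = ψ (k + 1) i x + α / ((1 - α) ^ k * (1 - α)) *
      (F (xs (k + 2) i) + ⟪gx (k + 2) i, x - xs (k + 2) i⟫
        + μbar / 2 * ‖x - xs (k + 2) i‖ ^ 2) := fun k i x => by
    rw [hψ (k + 1), hψ k, Finset.sum_Icc_succ_top (by omega), pow_succ]
    ring
  have hgrow : ∀ k ≤ N, ∀ i x, ψ (k + 1) i (ys (k + 1) i)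
      + (μbar * (1 / (1 - α) ^ k - 1 / 2)) / 2 * ‖x - ys (k + 1) i‖ ^ 2 ≤ ψ (k + 1) i x := by
    intro k hk i x
    refine growth_of_strongConvex ?_ (hymin k hk i) x
    have := estimating_strongConvex (Finset.Icc 1 k) (F (xs 1 i)) (μbar / 2)
      (((3 / 2) * μbar / Rbar) / 6) μbar (by positivity) (vhs 0 i) (fun j => α / (1 - α) ^ j)
      (fun j => F (xs (j + 1) i)) (fun j => gx (j + 1) i) (fun j => xs (j + 1) i)
    rw [sum_weights α (by linarith)] at this
    refine this.congr fun x _ => ?_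
    simp only [hψ]
    ring
  -- Estimating-sequence invariant, summed over the nodes. One step costs each node at most
  -- `(1/320 + 9/200 + 3/20) α ε ≤ 0.1983 α ε`, and the disagreement costs `α ε / 16`; together this
  -- is below `0.27 α ε`, and an error of at most `0.27 ε` is reproduced since it is discounted by
  -- `1 - α` in each step.
  have hinv : ∀ k ≤ N, ∑ i, F (xs (k + 1) i) ≤
      ∑ i, (1 - α) ^ k * (ψ (k + 1) i (ys (k + 1) i) - T k i) + m * (27 / 100 * ε) := by
    intro k
    induction k with
    | zero =>
      intro _
      have h1 : ∑ i, F (xs 1 i) ≤ ∑ i, ψ 1 i (ys 1 i) := by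
        refine Finset.sum_le_sum fun i _ => ?_
        rw [hψ 0]
        simp only [Finset.Icc_eq_empty (show ¬ (1 : ℕ) ≤ 0 by omega), Finset.sum_empty]
        have : 0 ≤ μbar / 2 / 2 * ‖ys 1 i - vhs 0 i‖ ^ 2
          + 3 / 2 * μbar / Rbar / 6 * ‖ys 1 i - vhs 0 i‖ ^ 3 := by positivity
        linarith
      have h2 : (0 : ℝ) ≤ m * (27 / 100 * ε) := by positivity
      simp only [T, Finset.Icc_eq_empty (show ¬ (1 : ℕ) ≤ 0 by omega), Finset.sum_empty,
        pow_zero, one_mul, sub_zero, zero_add]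
      linarith
    | succ k ih =>
      intro hk
      have ih := ih (by omega)
      have hA : 0 < (1 - α) ^ k := by positivity
      have hA1 : (1 - α) ^ k ≤ 1 := pow_le_one₀ hp.le (by linarith)
      have bx := fun i => (hbound (k + 2) (by omega) (by omega) i)
      have bk := fun i => (hbound (k + 1) (by omega) (by omega) i)
      have herr : ∀ i, ‖gx (k + 2) i - g (xs (k + 2) i)‖ ≤ ε / (8 * Rbar) + α * ε / 32 / Rbar := by
        intro i
        have a1 := norm_sub_average_le (fun j => gradient (f j)) L1 hL1 hL1nn (xs (k + 2))
          (xs (k + 2) i) (gx (k + 2) i) (ε / (8 * Rbar)) (α * ε / 32 / Rbar / L1bar)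
          ((hgx (k + 1) hk i).trans (hΔgx (k + 1) hk)) (fun j => by
            have := hcons (k + 1) (by omega) hk j i
            rw [le_div_iff₀ hL1pos, le_div_iff₀ hRbar]
            linarith)
        rw [← hL1bar, mul_div_cancel₀ _ hL1pos.ne'] at a1
        exact a1
      have hnode : ∀ i, (1 - α) * ((1 - α) ^ k * (ψ (k + 1) i (ys (k + 1) i) - T k i)
            - F (xs (k + 1) i))
          + ⟪g (xs (k + 2) i), vs (k + 1) i - (m : ℝ)⁻¹ • ∑ j, vs (k + 1) j⟫
          - α * (1983 / 10000 * ε)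
          ≤ (1 - α) ^ (k + 1) * (ψ (k + 2) i (ys (k + 2) i) - T (k + 1) i)
            - F (xs (k + 2) i) := by
        intro i
        have a1 := node_step hgH hHl hfo hL2bnn hα0 hα45 hμ (bD2 (k + 1) hk) hα3
          (hΔ1 (k + 1) hk i) (hΔ2 (k + 1) hk i) (hst (k + 1) hk i) hA hA1
          (hvk (k + 1) (by omega) hk i) (hvhs (k + 1) hk i)
          (hgrow k (by omega) i (ys (k + 2) i)) (hψs k i (ys (k + 2) i)) (hTs k i) (herr i)
          (B := L1bar * Rbar)
          ((hgb _).trans (mul_le_mul_of_nonneg_left (bx i).1 hL1pos.le))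
          (hdist _ _ (bx i).1 (bk i).2.2.2) (hdist _ _ (bx i).2.1 (bk i).2.1) (bx i).2.1
        have a2 : (ε / (8 * Rbar) + α * ε / 32 / Rbar) * Rbar = ε / 8 + α * ε / 32 := by
          field_simp
        rw [a2, ← pow_succ] at a1
        have a3 := bv1 (k + 1) hk
        have a4 : 2 * Rbar * (1 + α) * D1 (k + 1) ≤ 9 / 200 * (α * ε) := by
          have : (1 + α) * (D1 (k + 1) * Rbar) ≤ (9 / 5) * (α * ε / 80) :=
            mul_le_mul (by linarith) (bD1 _ hk) (mul_nonneg (hD10 _ hk) hRbar.le) (by norm_num)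
          linarith
        have a5 : α * (ε / 8 + α * ε / 32) ≤ α * (ε * (3 / 20)) := by
          have : α * ε ≤ 4 / 5 * ε := by gcongr
          gcongr
          linarith
        have a6 : 0 < α * ε := by positivity
        linarith
      have hdis := disagreement_le hm (fun i => g (xs (k + 2) i)) (vs (k + 1))
        (α * ε / 32 / Rbar) (2 * Rbar)
        (fun i j => (hgl _ _).trans (by
          rw [le_div_iff₀ hRbar]; exact hcons (k + 1) (by omega) hk i j))
        (fun i => by
          have := norm_average_sub_le hm (vs (k + 1)) xstar Rbar fun i => (bk i).2.2.1
          exact hdist _ _ (bk i).2.2.1 this)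
      have hd2 : α * ε / 32 / Rbar * (2 * Rbar) = α * ε / 16 := by field_simp; norm_num
      rw [hd2] at hdis
      have hsum := Finset.sum_le_sum fun i (_ : i ∈ Finset.univ) => hnode i
      simp only [Finset.sum_sub_distrib, Finset.sum_add_distrib, ← Finset.mul_sum,
        Finset.sum_const, Finset.card_univ, Fintype.card_fin, nsmul_eq_mul] at hsum
      simp only [← Finset.mul_sum, Finset.sum_sub_distrib] at ih ⊢
      have hih := mul_le_mul_of_nonneg_left ih hp.le
      have hme : 0 < (m : ℝ) * (α * ε) := by positivity
      linarith
  -- evaluation of the invariant at `xstar`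
  have hN1 := hinv N le_rfl
  have hAN : 0 < (1 - α) ^ N := by positivity
  have hAN1 : (1 - α) ^ N ≤ 1 := pow_le_one₀ hp.le (by linarith)
  have hx0 : xbar 0 = x0 := by
    rw [hxbar]
    simp [hinit, ← Nat.cast_smul_eq_nsmul ℝ, smul_smul, hm0.ne']
  have hpow := pow_mul_le_one_of_ceil_le hα0 (by linarith) hN
  rw [hx0] at hpow
  have hgap : μbar / 2 * R ^ 2 ≤ F x0 - F xstar := by
    have := hfo2 xstar x0
    rw [hgstar, inner_zero_left, ← hR] at this
    linarith
  have hend : ∀ i, (1 - α) ^ N * (ψ (N + 1) i (ys (N + 1) i) - T N i)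
      ≤ F xstar + 7 / 10 * ε := by
    intro i
    obtain ⟨r, hr⟩ : ∃ r, r = ‖xstar - vhs 0 i‖ := ⟨_, rfl⟩
    have hr0 : 0 ≤ r := by rw [hr]; positivity
    have hrd : r ≤ R + Δv 0 := by
      have a1 := hvhs 0 (by omega) i
      have a2 : (m : ℝ)⁻¹ • ∑ j, vs 0 j = x0 := by
        simp [hinit, ← Nat.cast_smul_eq_nsmul ℝ, smul_smul, hm0.ne']
      rw [a2] at a1
      rw [hr, hR]
      calc ‖xstar - vhs 0 i‖ = ‖(x0 - xstar) + (vhs 0 i - x0)‖ := by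
            rw [← norm_neg]; congr 1; abel
        _ ≤ _ := (norm_add_le _ _).trans (by linarith)
    have hstep0 : ‖xs 1 i - vhs 0 i‖ ≤ Rbar + r := by
      calc ‖xs 1 i - vhs 0 i‖ = ‖(xs 1 i - xstar) + (xstar - vhs 0 i)‖ := by congr 1; abel
        _ ≤ _ := (norm_add_le _ _).trans
          (by linarith [(hbound 1 le_rfl (by omega) i).1])
    have hgap0 := initial_gap_le hAN.le hAN1 (by rw [hR]; positivity) hr0 hrd (hv0 0 (by omega))
      (hD10 0 (by omega)) (hD20 0 (by omega)) hμ hμL hL2pos hRbar hα0 hα45 hε hεL.le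
      (bv1 0 (by omega)) (bv2 0 (by omega)) (bD1 0 (by omega)) (bD2 0 (by omega)) hC hgap hpow
    have hv1 := hval 0 (by omega) i
    rw [← hr] at hv1
    have hv2 : F (xs 1 i) - F xstar ≤ D1 0 * (2 * r + Rbar) + 2 * D2 0 * r ^ 2
        + 2 / 3 * L2bar * r ^ 3 := by
      have : D1 0 * (r + ‖xs 1 i - vhs 0 i‖) ≤ D1 0 * (r + (Rbar + r)) :=
        mul_le_mul_of_nonneg_left (by linarith) (hD10 0 (by omega))
      linarith
    have hψx : ψ (N + 1) i xstar - T N i ≤ F (xs 1 i) + μbar / 4 * r ^ 2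
        + μbar / Rbar / 4 * r ^ 3 + (1 / (1 - α) ^ N - 1) * F xstar := by
      rw [hψ, ← hr, ← sum_weights α (by linarith) N, Finset.sum_mul]
      have : ∑ j ∈ Finset.Icc 1 N, (α / (1 - α) ^ j) *
            (F (xs (j + 1) i) + ⟪gx (j + 1) i, xstar - xs (j + 1) i⟫
              + (μbar / 2) * ‖xstar - xs (j + 1) i‖ ^ 2) - T N i
          ≤ ∑ j ∈ Finset.Icc 1 N, α / (1 - α) ^ j * F xstar := by
        simp only [T]
        rw [← Finset.sum_sub_distrib]
        refine Finset.sum_le_sum fun j _ => ?_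
        have a1 := hfo2 (xs (j + 1) i) xstar
        rw [← mul_sub]
        refine mul_le_mul_of_nonneg_left ?_ (by positivity)
        rw [inner_sub_left]
        linarith
      have e : 3 / 2 * μbar / Rbar / 6 = μbar / Rbar / 4 := by ring
      rw [e]
      linarith
    have hb := mul_le_mul_of_nonneg_left
      ((sub_le_sub_right (hymin N le_rfl i xstar) (T N i)).trans hψx) hAN.le
    have hv3 := mul_le_mul_of_nonneg_left hv2 hAN.le
    have e : (1 - α) ^ N * ((1 / (1 - α) ^ N - 1) * F xstar)
        = F xstar - (1 - α) ^ N * F xstar := by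
      field_simp
    linarith
  have hsum := Finset.sum_le_sum fun i (_ : i ∈ Finset.univ) => hend i
  simp only [Finset.sum_const, Finset.card_univ, Fintype.card_fin, nsmul_eq_mul] at hsum
  have hfin := mul_le_mul_of_nonneg_left (hN1.trans (add_le_add_left hsum _))
    (inv_nonneg.2 hm0.le)
  rw [← mul_add, inv_mul_cancel_left₀ hm0.ne'] at hfin
  linarith
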